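/- arXiv:1606.00563 — 5 statements merged into one kernel-verified Lean document; each statement's English description precedes it below -/
import Mathlib

section
/- Let α be an element of the partition monoid P_n with transversal blocks A_1∪B_1', …, A_r∪B_r', upper non-transversal blocks C_1,…,C_p and lower non-transversal blocks D_1',…,D_q'. For each 1 ≤ i ≤ r choose a_i ∈ A_i and b_i ∈ B_i. Then α = βγδ, where β ∈ P_n is the partition with transversal blocks A_1∪A_1',…,A_r∪A_r', C_1∪C_1',…,C_p∪C_p'; γ ∈ P_n is the partition with transversal blocks {a_1,b_1'},…,{a_r,b_r'} and all other points in singleton blocks; and δ ∈ P_n is the partition with transversal blocks B_1∪B_1',…,B_r∪B_r', D_1∪D_1',…,D_q∪D_q'. -/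
/-!
Connectivity in a product graph is the least equivalence relation containing the edges, which
gives both inclusions between `α` and `βγδ`.

To see that `βγδ` refines `α`, label each vertex of a product graph by a point of `[n] ∪ [n]'`: an
index `i` lying in a row above `γ` is labelled `i`, and an index lying in a row below `γ` is
labelled `i'`. Every edge of `β`, `γ` or `δ` then joins vertices whose labels are `α`-related, so
connected vertices have `α`-related labels (`mul_rel_le`, applied to each of the two products).

Conversely, every point of a transversal block `A_i ∪ B_i'` is connected to the middle vertex `b_i`
of `Γ(βγ, δ)`: from above through `a_i` by `β` and then `γ`, from below by `δ`. An upper block `C_j`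
is connected by `β` alone and a lower block `D_k'` by `δ` alone. As `β`, `γ` and `δ` have no rook
dots, no white vertices occur, and connectivity alone determines the product (`mul_rel_iff`).
-/

namespace RookPaper

/-- Reflexive–symmetric–transitive closure of a relation
(connectivity by paths in a graph). -/
inductive RClosure {V : Type*} (E : V → V → Prop) : V → V → Prop
  | base {x y : V} : E x y → RClosure E x y
  | refl (x : V) : RClosure E x x
  | symm {x y : V} : RClosure E x y → RClosure E y x
  | trans {x y z : V} : RClosure E x y → RClosure E y z → RClosure E x z

/-- The 2n points `1,…,n` (`Sum.inl`) and `1',…,n'` (`Sum.inr`). -/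
abbrev Pt (n : ℕ) := Fin n ⊕ Fin n

/-- A rook partition of degree `n`, encoded as a partial equivalence relation on the
`2n` points: its blocks are the equivalence classes of `rel`, and the rook dots are the
points `x` with `¬ rel x x`. -/
structure RP (n : ℕ) where
  rel : Pt n → Pt n → Prop
  symm : ∀ {x y : Pt n}, rel x y → rel y x
  trans : ∀ {x y z : Pt n}, rel x y → rel y z → rel x z

/-- The underlying index in `[n]` of a point (`i` and `i'` both have index `i`). -/
def idx {n : ℕ} : Pt n → Fin n := Sum.elim id id

/-- For `A ⊆ [n]`, the corresponding set of upper points. -/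
def upSet {n : ℕ} (A : Set (Fin n)) : Set (Pt n) := Sum.inl '' A

/-- For `B ⊆ [n]`, the set `B' = {b' : b ∈ B}` of lower points. -/
def dnSet {n : ℕ} (B : Set (Fin n)) : Set (Pt n) := Sum.inr '' B

/-- `x` is a rook dot of `α`. -/
def RP.IsRookDot {n : ℕ} (α : RP n) (x : Pt n) : Prop := ¬ α.rel x x

/-- `α` has no rook dots, i.e. `α` lies in the partition monoid `P_n`. -/
def RP.NoDots {n : ℕ} (α : RP n) : Prop := ∀ x, α.rel x x

/-- `B` is a block of `α`. -/
def RP.IsBlock {n : ℕ} (α : RP n) (B : Set (Pt n)) : Prop :=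
  ∃ x, α.rel x x ∧ B = {y | α.rel x y}

/-- The identity rook partition, with blocks `{i,i'}`. -/
instance {n : ℕ} : One (RP n) :=
  ⟨{ rel := fun x y => idx x = idx y
     symm := fun h => Eq.symm h
     trans := fun h h' => Eq.trans h h' }⟩

/-! The product graph `Γ(α,β)` lives on three rows of `n` vertices. -/

abbrev V3 (n : ℕ) := Fin n ⊕ Pt n

def vTop {n : ℕ} (i : Fin n) : V3 n := Sum.inl i
def vMid {n : ℕ} (i : Fin n) : V3 n := Sum.inr (Sum.inl i)
def vBot {n : ℕ} (i : Fin n) : V3 n := Sum.inr (Sum.inr i)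

/-- `α` occupies the top and middle rows. -/
def embA {n : ℕ} : Pt n → V3 n := Sum.elim vTop vMid
/-- `β` occupies the middle and bottom rows. -/
def embB {n : ℕ} : Pt n → V3 n := Sum.elim vMid vBot
/-- The product `αβ` lives on the top and bottom rows. -/
def embOut {n : ℕ} : Pt n → V3 n := Sum.elim vTop vBot

/-- The edges of the product graph `Γ(α,β)`. -/
def pgEdge {n : ℕ} (α β : RP n) (x y : V3 n) : Prop :=
  (∃ a b : Pt n, α.rel a b ∧ x = embA a ∧ y = embA b) ∨
  (∃ a b : Pt n, β.rel a b ∧ x = embB a ∧ y = embB b)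

/-- Connectivity (by a possibly empty path) in the product graph `Γ(α,β)`. -/
def pgConn {n : ℕ} (α β : RP n) : V3 n → V3 n → Prop :=
  RClosure (pgEdge α β)

/-- The white vertices of `Γ(α,β)`: a top vertex is white if it is a rook dot of `α`,
a bottom vertex is white if it is a rook dot of `β`, and a middle vertex is white if it is
a rook dot of `α` (as a lower point) or of `β` (as an upper point). -/
def pgWhite {n : ℕ} (α β : RP n) (v : V3 n) : Prop :=
  (∃ i, v = vTop i ∧ ¬ α.rel (Sum.inl i) (Sum.inl i)) ∨
  (∃ i, v = vMid i ∧ (¬ α.rel (Sum.inr i) (Sum.inr i) ∨ ¬ β.rel (Sum.inl i) (Sum.inl i))) ∨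
  (∃ i, v = vBot i ∧ ¬ β.rel (Sum.inr i) (Sum.inr i))

/-- The product of two rook partitions: a point of `αβ` is a rook dot iff it is connected
to a white vertex of `Γ(α,β)`, and two points are in the same block of `αβ` iff they are
connected in `Γ(α,β)` (and are not rook dots). -/
instance {n : ℕ} : Mul (RP n) :=
  ⟨fun α β =>
    { rel := fun x y =>
        pgConn α β (embOut x) (embOut y) ∧
          ∀ w, pgWhite α β w → ¬ pgConn α β (embOut x) w
      symm := by
        intro x y h
        exact ⟨RClosure.symm h.1, fun w hw hc => h.2 w hw (RClosure.trans h.1 hc)⟩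
      trans := by
        intro x y z h h'
        exact ⟨RClosure.trans h.1 h'.1, h.2⟩ }⟩

/-- The rook partition corresponding to a permutation `σ`: blocks `{i, (σ i)'}`. -/
def permRP {n : ℕ} (σ : Equiv.Perm (Fin n)) : RP n where
  rel x y := Sum.elim (fun i => σ i) (fun i => i) x = Sum.elim (fun i => σ i) (fun i => i) y
  symm := fun h => Eq.symm h
  trans := fun h h' => Eq.trans h h'

/-- `α` lies in the copy of the symmetric group `S_n` inside `RP_n`. -/
def RP.IsPermDiag {n : ℕ} (α : RP n) : Prop := ∃ σ : Equiv.Perm (Fin n), α = permRP σ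

/-- The generator `ē_i` : blocks `{j,j'}` for `j ≠ i`, and singleton blocks `{i}`, `{i'}`. -/
def ebar {n : ℕ} (i : Fin n) : RP n where
  rel x y := x = y ∨ (idx x = idx y ∧ idx x ≠ i)
  symm := by
    rintro x y (rfl | ⟨h1, h2⟩)
    · exact Or.inl rfl
    · exact Or.inr ⟨h1.symm, h1 ▸ h2⟩
  trans := by
    rintro x y z (rfl | ⟨h1, h2⟩) h
    · exact h
    · rcases h with rfl | ⟨h3, h4⟩
      · exact Or.inr ⟨h1, h2⟩
      · exact Or.inr ⟨h1.trans h3, h2⟩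

/-- The generator `t̄_ij` (for `i ≠ j`): blocks `{k,k'}` for `k ∉ {i,j}`, and `{i,j,i',j'}`. -/
def tbar {n : ℕ} (i j : Fin n) : RP n where
  rel x y := idx x = idx y ∨ ((idx x = i ∨ idx x = j) ∧ (idx y = i ∨ idx y = j))
  symm := by
    rintro x y (h | ⟨h1, h2⟩)
    · exact Or.inl h.symm
    · exact Or.inr ⟨h2, h1⟩
  trans := by
    rintro x y z hxy hyz
    rcases hxy with h | ⟨h1, h2⟩
    · rcases hyz with h' | ⟨h3, h4⟩
      · exact Or.inl (h.trans h')
      · refine Or.inr ⟨?_, h4⟩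
        rw [h]; exact h3
    · rcases hyz with h' | ⟨h3, h4⟩
      · refine Or.inr ⟨h1, ?_⟩
        rw [← h']; exact h2
      · exact Or.inr ⟨h1, h4⟩

/-- `ō_A` for a subset `A ⊆ [n]`: rook dots at all points of `A ∪ A'`, blocks `{j,j'}` for
`j ∉ A`. -/
def obarS {n : ℕ} (A : Set (Fin n)) : RP n where
  rel x y := idx x = idx y ∧ idx x ∉ A
  symm := by
    rintro x y ⟨h1, h2⟩
    exact ⟨h1.symm, h1 ▸ h2⟩
  trans := by
    rintro x y z ⟨h1, h2⟩ ⟨h3, h4⟩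
    exact ⟨h1.trans h3, h2⟩

/-- The generator `ō_i`: rook dots `i` and `i'`, blocks `{j,j'}` for `j ≠ i`. -/
def obar {n : ℕ} (i : Fin n) : RP n := obarS {i}

/-- For an index `i` of a simple transposition (`1 ≤ i ≤ n-1`, zero-based `Fin (n-1)`),
the smaller of the two swapped points. -/
def lo {n : ℕ} (i : Fin (n - 1)) : Fin n := ⟨i.val, by have := i.isLt; omega⟩
/-- The larger of the two swapped points. -/
def hi {n : ℕ} (i : Fin (n - 1)) : Fin n := ⟨i.val + 1, by have := i.isLt; omega⟩

/-- The generator `s̄_i`: the simple transposition with blocks `{i,(i+1)'}`, `{i+1,i'}`,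
and `{j,j'}` for other `j`. -/
def sbar {n : ℕ} (i : Fin (n - 1)) : RP n := permRP (Equiv.swap (lo i) (hi i))

/-- The generator `q̄_i = t̄_{i,i+1}`. -/
def qbar {n : ℕ} (i : Fin (n - 1)) : RP n := tbar (lo i) (hi i)

/-- Membership in the subsemigroup generated by a subset `X`. -/
inductive SgGen {M : Type*} [Mul M] (X : Set M) : M → Prop
  | incl {x : M} : x ∈ X → SgGen X x
  | mul {a b : M} : SgGen X a → SgGen X b → SgGen X (a * b)

/-- Membership in the submonoid generated by a subset `X`. -/
inductive MonGen {M : Type*} [Mul M] [One M] (X : Set M) : M → Prop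
  | one : MonGen X 1
  | incl {x : M} : x ∈ X → MonGen X x
  | mul {a b : M} : MonGen X a → MonGen X b → MonGen X (a * b)

/-- Evaluation of a word under a map on the letters (the product, in order, of the images
of the letters; the empty word evaluates to `1`). -/
def evalWord {X M : Type*} [Mul M] [One M] (f : X → M) : List X → M
  | [] => 1
  | [x] => f x
  | x :: y :: w => f x * evalWord f (y :: w)

/-- The congruence on the free monoid of words (with product = concatenation) generated
by a set of pairs `R`.  Restricted to nonempty words it is the congruence on the free
semigroup generated by `R`. -/
inductive CongGen {X : Type*} (R : List X → List X → Prop) : List X → List X → Prop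
  | rel {u v : List X} : R u v → CongGen R u v
  | refl (u : List X) : CongGen R u u
  | symm {u v : List X} : CongGen R u v → CongGen R v u
  | trans {u v w : List X} : CongGen R u v → CongGen R v w → CongGen R u w
  | mul {u v u' v' : List X} : CongGen R u v → CongGen R u' v' → CongGen R (u ++ u') (v ++ v')


/-- The element of `P_n` whose blocks are `F i ∪ (F i)'` for the members `F i` of a
family of subsets of `[n]` covering `[n]` pairwise-disjointly. -/
def diagOf {n : ℕ} {ι : Type} (F : ι → Set (Fin n)) : RP n where
  rel := RClosure (fun x y => ∃ i, idx x ∈ F i ∧ idx y ∈ F i)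
  symm := fun h => RClosure.symm h
  trans := fun h h' => RClosure.trans h h'

/-- The partition (element of `P_n`) with transversal blocks `{a_i, b_i'}` and all other
points in singleton blocks. -/
def gammaT {n r : ℕ} (a b : Fin r → Fin n) : RP n where
  rel := RClosure (fun x y => ∃ i, x = Sum.inl (a i) ∧ y = Sum.inr (b i))
  symm := fun h => RClosure.symm h
  trans := fun h h' => RClosure.trans h h'

theorem RClosure.le_of_equivalence {V : Type*} {E R : V → V → Prop} (hR : Equivalence R)
    (h : ∀ x y, E x y → R x y) {x y : V} (hxy : RClosure E x y) : R x y := by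
  induction hxy with
  | base e => exact h _ _ e
  | refl x => exact hR.refl x
  | symm _ ih => exact hR.symm ih
  | trans _ _ ih₁ ih₂ => exact hR.trans ih₁ ih₂

theorem RP.eq_of_rel_iff {n : ℕ} {α β : RP n} (h : ∀ x y, α.rel x y ↔ β.rel x y) : α = β := by
  cases α
  cases β
  congr
  funext x y
  exact propext (h x y)

theorem RP.NoDots.equivalence {n : ℕ} {α : RP n} (h : α.NoDots) : Equivalence α.rel :=
  ⟨h, α.symm, α.trans⟩

/-- Without rook dots there are no white vertices, so the product is given by connectivity in the
product graph alone. -/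
theorem mul_rel_iff {n : ℕ} {α β : RP n} (hα : α.NoDots) (hβ : β.NoDots) (x y : Pt n) :
    (α * β).rel x y ↔ pgConn α β (embOut x) (embOut y) := by
  refine ⟨fun h => h.1, fun h => ⟨h, ?_⟩⟩
  rintro w (⟨i, -, hi⟩ | ⟨i, -, hi | hi⟩ | ⟨i, -, hi⟩) _
  · exact hi (hα _)
  · exact hi (hα _)
  · exact hi (hβ _)
  · exact hi (hβ _)

theorem RP.NoDots.mul {n : ℕ} {α β : RP n} (hα : α.NoDots) (hβ : β.NoDots) :
    (α * β).NoDots :=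
  fun x => (mul_rel_iff hα hβ x x).2 (RClosure.refl _)

/-- If the vertices of `Γ(α,β)` carry labels in `X` such that the edges of `α` and `β` join
vertices with equivalent labels, then related points of `αβ` have equivalent labels. -/
theorem mul_rel_le {n : ℕ} {X : Type*} {R : X → X → Prop} (hR : Equivalence R) {α β : RP n}
    (f : V3 n → X) (hα : ∀ x y, α.rel x y → R (f (embA x)) (f (embA y)))
    (hβ : ∀ x y, β.rel x y → R (f (embB x)) (f (embB y))) {x y : Pt n}
    (h : (α * β).rel x y) : R (f (embOut x)) (f (embOut y)) := by
  refine RClosure.le_of_equivalence (R := fun v w => R (f v) (f w))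
    ⟨fun v => hR.refl _, hR.symm, hR.trans⟩ ?_ h.1
  rintro v w (⟨c, d, hcd, rfl, rfl⟩ | ⟨c, d, hcd, rfl, rfl⟩)
  · exact hα c d hcd
  · exact hβ c d hcd

theorem pgConn_left {n : ℕ} {α : RP n} (β : RP n) {x y : Pt n} (h : α.rel x y) :
    pgConn α β (embA x) (embA y) :=
  RClosure.base (Or.inl ⟨x, y, h, rfl, rfl⟩)

theorem pgConn_right {n : ℕ} (α : RP n) {β : RP n} {x y : Pt n} (h : β.rel x y) :
    pgConn α β (embB x) (embB y) :=
  RClosure.base (Or.inr ⟨x, y, h, rfl, rfl⟩)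

theorem diagOf_noDots {n : ℕ} {ι : Type} (F : ι → Set (Fin n)) : (diagOf F).NoDots :=
  fun x => RClosure.refl x

theorem gammaT_noDots {n r : ℕ} (a b : Fin r → Fin n) : (gammaT a b).NoDots :=
  fun x => RClosure.refl x

theorem diagOf_rel {n : ℕ} {ι : Type} {F : ι → Set (Fin n)} (i : ι) {x y : Pt n}
    (hx : idx x ∈ F i) (hy : idx y ∈ F i) : (diagOf F).rel x y :=
  RClosure.base ⟨i, hx, hy⟩

theorem diagOf_rel_le {n : ℕ} {ι : Type} {F : ι → Set (Fin n)} {R : Fin n → Fin n → Prop}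
    (hR : Equivalence R) (h : ∀ i, ∀ u ∈ F i, ∀ v ∈ F i, R u v) {x y : Pt n}
    (hxy : (diagOf F).rel x y) : R (idx x) (idx y) :=
  RClosure.le_of_equivalence (R := fun x y => R (idx x) (idx y))
    ⟨fun _ => hR.refl _, hR.symm, hR.trans⟩
    (fun _ _ ⟨i, hx, hy⟩ => h i _ hx _ hy) hxy

theorem RP.IsBlock.rel {n : ℕ} {α : RP n} {S : Set (Pt n)} (hS : α.IsBlock S) {x y : Pt n}
    (hx : x ∈ S) (hy : y ∈ S) : α.rel x y := by
  obtain ⟨z, -, rfl⟩ := hS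
  exact α.trans (α.symm hx) hy

/-- Proposition on normal forms in `P_n`:  if `α ∈ P_n` has transversal
blocks `A_i ∪ B_i'` (`1 ≤ i ≤ r`), upper non-transversal blocks `C_j` (`1 ≤ j ≤ p`) and
lower non-transversal blocks `D_k'` (`1 ≤ k ≤ q`), and if `a_i ∈ A_i`, `b_i ∈ B_i` for
each `i`, then `α = β γ δ` where `β` has transversal blocks `A_i ∪ A_i'`, `C_j ∪ C_j'`,
`γ` has transversal blocks `{a_i, b_i'}` and all other points in singleton blocks, and
`δ` has transversal blocks `B_i ∪ B_i'`, `D_k ∪ D_k'`. -/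
theorem stmt0 (n : ℕ) (hn : 1 ≤ n) (α : RP n) (r p q : ℕ)
    (A B : Fin r → Set (Fin n)) (C : Fin p → Set (Fin n)) (D : Fin q → Set (Fin n))
    (hND : α.NoDots)
    (hblocks : ∀ S : Set (Pt n), α.IsBlock S ↔
      ((∃ i, S = upSet (A i) ∪ dnSet (B i)) ∨ (∃ j, S = upSet (C j)) ∨
        (∃ k, S = dnSet (D k))))
    (hAne : ∀ i, (A i).Nonempty) (hBne : ∀ i, (B i).Nonempty)
    (hCne : ∀ j, (C j).Nonempty) (hDne : ∀ k, (D k).Nonempty)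
    (hTinj : ∀ i i', upSet (A i) ∪ dnSet (B i) = upSet (A i') ∪ dnSet (B i') → i = i')
    (hCinj : ∀ j j', C j = C j' → j = j')
    (hDinj : ∀ k k', D k = D k' → k = k')
    (a b : Fin r → Fin n) (ha : ∀ i, a i ∈ A i) (hb : ∀ i, b i ∈ B i) :
    α = diagOf (Sum.elim A C) * gammaT a b * diagOf (Sum.elim B D) := by
  have hA (i : Fin r) : α.IsBlock (upSet (A i) ∪ dnSet (B i)) := (hblocks _).2 (Or.inl ⟨i, rfl⟩)
  have hC (j : Fin p) : α.IsBlock (upSet (C j)) := (hblocks _).2 (Or.inr (Or.inl ⟨j, rfl⟩))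
  have hD (k : Fin q) : α.IsBlock (dnSet (D k)) := (hblocks _).2 (Or.inr (Or.inr ⟨k, rfl⟩))
  have hβ := diagOf_noDots (Sum.elim A C)
  have hγ := gammaT_noDots a b
  have hδ := diagOf_noDots (Sum.elim B D)
  have hE := hND.equivalence
  refine RP.eq_of_rel_iff fun x y => ⟨fun h => ?_, fun h => ?_⟩
  · rw [mul_rel_iff (hβ.mul hγ) hδ]
    have hup (i : Fin r) (u : Fin n) (hu : u ∈ A i) :
        (diagOf (Sum.elim A C) * gammaT a b).rel (Sum.inl u) (Sum.inr (b i)) := by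
      rw [mul_rel_iff hβ hγ]
      have h₁ : (diagOf (Sum.elim A C)).rel (Sum.inl u) (Sum.inr (a i)) :=
        diagOf_rel (Sum.inl i) hu (ha i)
      have h₂ : (gammaT a b).rel (Sum.inl (a i)) (Sum.inr (b i)) :=
        RClosure.base ⟨i, rfl, rfl⟩
      exact (pgConn_left _ h₁).trans (pgConn_right _ h₂)
    have hmid (i : Fin r) (z : Pt n) (hz : z ∈ upSet (A i) ∪ dnSet (B i)) :
        pgConn (diagOf (Sum.elim A C) * gammaT a b) (diagOf (Sum.elim B D))
          (embOut z) (vMid (b i)) := by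
      rcases hz with ⟨u, hu, rfl⟩ | ⟨u, hu, rfl⟩
      · exact pgConn_left _ (hup i u hu)
      · have h₃ : (diagOf (Sum.elim B D)).rel (Sum.inr u) (Sum.inl (b i)) :=
          diagOf_rel (Sum.inl i) hu (hb i)
        exact pgConn_right _ h₃
    have hx : x ∈ {z | α.rel x z} := hND x
    have hy : y ∈ {z | α.rel x z} := h
    rcases (hblocks _).1 ⟨x, hND x, rfl⟩ with ⟨i, hi⟩ | ⟨j, hj⟩ | ⟨k, hk⟩
    · rw [hi] at hx hy
      exact (hmid i x hx).trans (hmid i y hy).symm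
    · rw [hj] at hx hy
      obtain ⟨u, hu, rfl⟩ := hx
      obtain ⟨v, hv, rfl⟩ := hy
      have h₁ : (diagOf (Sum.elim A C)).rel (Sum.inl u) (Sum.inl v) :=
        diagOf_rel (Sum.inr j) hu hv
      have h₂ : (diagOf (Sum.elim A C) * gammaT a b).rel (Sum.inl u) (Sum.inl v) :=
        (mul_rel_iff hβ hγ _ _).2 (pgConn_left _ h₁)
      exact pgConn_left _ h₂
    · rw [hk] at hx hy
      obtain ⟨u, hu, rfl⟩ := hx
      obtain ⟨v, hv, rfl⟩ := hy
      have h₁ : (diagOf (Sum.elim B D)).rel (Sum.inr u) (Sum.inr v) :=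
        diagOf_rel (Sum.inr k) hu hv
      exact pgConn_right _ h₁
  · have hβα (x y : Pt n) (h : (diagOf (Sum.elim A C)).rel x y) :
        α.rel (Sum.inl (idx x)) (Sum.inl (idx y)) := by
      refine diagOf_rel_le (R := fun u v => α.rel (Sum.inl u) (Sum.inl v))
        ⟨fun _ => hND _, hE.symm, hE.trans⟩ ?_ h
      rintro (i | j) u hu v hv
      · exact (hA i).rel (Or.inl ⟨u, hu, rfl⟩) (Or.inl ⟨v, hv, rfl⟩)
      · exact (hC j).rel ⟨u, hu, rfl⟩ ⟨v, hv, rfl⟩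
    have hδα (x y : Pt n) (h : (diagOf (Sum.elim B D)).rel x y) :
        α.rel (Sum.inr (idx x)) (Sum.inr (idx y)) := by
      refine diagOf_rel_le (R := fun u v => α.rel (Sum.inr u) (Sum.inr v))
        ⟨fun _ => hND _, hE.symm, hE.trans⟩ ?_ h
      rintro (i | k) u hu v hv
      · exact (hA i).rel (Or.inr ⟨u, hu, rfl⟩) (Or.inr ⟨v, hv, rfl⟩)
      · exact (hD k).rel ⟨u, hu, rfl⟩ ⟨v, hv, rfl⟩
    have hγα (x y : Pt n) (h : (gammaT a b).rel x y) : α.rel x y := by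
      refine RClosure.le_of_equivalence hE ?_ h
      rintro _ _ ⟨i, rfl, rfl⟩
      exact (hA i).rel (Or.inl ⟨_, ha i, rfl⟩) (Or.inr ⟨_, hb i, rfl⟩)
    have hβγα (x y : Pt n) (h : (diagOf (Sum.elim A C) * gammaT a b).rel x y) : α.rel x y := by
      -- The top and middle rows of `Γ(β,γ)` lie above `γ`, the bottom row below it.
      have key := mul_rel_le hE (Sum.elim Sum.inl id : V3 n → Pt n) ?_ ?_ h
      · rcases x with u | u <;> rcases y with v | v <;> exact key
      · intro x y hxy
        rcases x with u | u <;> rcases y with v | v <;> exact hβα _ _ hxy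
      · intro x y hxy
        rcases x with u | u <;> rcases y with v | v <;> exact hγα _ _ hxy
    -- In `Γ(βγ,δ)` only the top row lies above `γ`.
    have key := mul_rel_le hE (Sum.elim Sum.inl (fun z => Sum.inr (idx z)) : V3 n → Pt n) ?_ ?_ h
    · rcases x with u | u <;> rcases y with v | v <;> exact key
    · intro x y hxy
      rcases x with u | u <;> rcases y with v | v <;> exact hβγα _ _ hxy
    · intro x y hxy
      rcases x with u | u <;> rcases y with v | v <;> exact hδα _ _ hxy

end RookPaper
end

section
/- The singular part RP_n ∖ S_n of the rook partition monoid is generated, as a semigroup, by the set {ē_1,…,ē_n} ∪ {t̄_ij : 1 ≤ i < j ≤ n} ∪ {ō_1,…,ō_n}; in particular, since each of these generators is an idempotent, RP_n ∖ S_n is generated by its idempotents. -/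
/-!
Let `S` be the subsemigroup generated by the `ē_i`, `t̄_ij` and `ō_i`.

*`S` consists of singular elements.* If `αβ` is a permutation then so is `α`
(`isPermDiag_left_of_mul`), and no generator is a permutation.

*`S` absorbs permutations* (`sg_act`). Conjugation by a permutation permutes the generators, and every
generator satisfies `g = g ē_i g` for some `i`, so `g σ = g (ē_i σ) (σ⁻¹ g σ)`. It is thus enough to
show `ē_i σ ∈ S` for a transposition `σ`. If `σ = (i l)` this is `ē_i (i l) = ē_i t̄_il ē_l`; otherwise
`(k l) = (i k)(k l)(l i)` and the first formula applies three times.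

*`S` and the permutations exhaust `RP_n`* (`good_all`). If `i ≠ j` are upper points in the same block
then `α = t̄_ij (ē_i α)`, and `ē_i α` has fewer related pairs; likewise for lower points. Otherwise all
blocks are singletons or of the form `{i,j'}`. If some upper point `i` is outside these pairs, so is
some lower point `j'`, and `α = x α' y` where `α'` has the additional block `{i,j'}`, `x ∈ {ē_i, ō_i}`
and `y ∈ {ē_j, ō_j}`. If all upper points are paired, `α` is a permutation.

Associativity of the product is avoided: multiplication by permutations is replaced by relabelling of
points (`act`), and products with generators are computed explicitly (`ebar_mul`, `obar_mul`,
`tbar_mul` and their mirror images), all from the criterion `live_eq`.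
-/

namespace RookPaper

/-- The generating set `{ē_1,…,ē_n} ∪ {t̄_ij : 1 ≤ i < j ≤ n} ∪ {ō_1,…,ō_n}`. -/
def singGenSet (n : ℕ) : Set (RP n) :=
  Set.range ebar ∪ {x | ∃ i j : Fin n, i < j ∧ x = tbar i j} ∪ Set.range obar

section Proof

variable {n : ℕ}

/-! ### The product graph -/

theorem RP.ext_rel {α β : RP n} (h : ∀ x y, α.rel x y ↔ β.rel x y) : α = β := by
  cases α; cases β
  simp only [RP.mk.injEq]
  funext x y
  exact propext (h x y)

theorem RP.rel_comm (α : RP n) (x y : Pt n) : α.rel x y ↔ α.rel y x := ⟨α.symm, α.symm⟩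

theorem RP.rel_congr_left (α : RP n) {x y z : Pt n} (h : α.rel x y) : α.rel x z ↔ α.rel y z :=
  ⟨fun hxz => α.trans (α.symm h) hxz, fun hyz => α.trans h hyz⟩

/-- `u` and `v` are connected in `Γ(α,β)` and their component has no white vertex. The product
`αβ` is the restriction of this partial equivalence relation to the outer rows. -/
def live (α β : RP n) (u v : V3 n) : Prop :=
  pgConn α β u v ∧ ∀ w, pgWhite α β w → ¬ pgConn α β u w

theorem mul_rel (α β : RP n) (x y : Pt n) :
    (α * β).rel x y ↔ live α β (embOut x) (embOut y) := Iff.rfl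

theorem pgEdge_symm {α β : RP n} {u v : V3 n} (h : pgEdge α β u v) : pgEdge α β v u := by
  rcases h with ⟨a, b, h, rfl, rfl⟩ | ⟨a, b, h, rfl, rfl⟩
  · exact Or.inl ⟨b, a, α.symm h, rfl, rfl⟩
  · exact Or.inr ⟨b, a, β.symm h, rfl, rfl⟩

/-- Only components matter: a property carried along edges is constant on components. -/
theorem conn_induct {V : Type*} {E : V → V → Prop} (hE : ∀ u v, E u v → E v u) {P : V → Prop}
    (h : ∀ u v, E u v → P u → P v) {u v : V} (c : RClosure E u v) : P u ↔ P v := by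
  induction c with
  | base e => exact ⟨h _ _ e, h _ _ (hE _ _ e)⟩
  | refl => exact Iff.rfl
  | symm _ ih => exact ih.symm
  | trans _ _ ih ih' => exact ih.trans ih'

/-- Certificate for computing a product: a partial equivalence relation `N` on the three rows is
`live α β` as soon as it absorbs edges, avoids white vertices, relates only connected vertices, and
omits only vertices that reach a white one. -/
theorem live_eq {α β : RP n} (N : V3 n → V3 n → Prop)
    (hsymm : ∀ u v, N u v → N v u) (htrans : ∀ u v w, N u v → N v w → N u w)
    (hedge : ∀ u v, pgEdge α β u v → N u u → N u v)
    (hwhite : ∀ u, pgWhite α β u → ¬ N u u)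
    (hconn : ∀ u v, N u v → pgConn α β u v)
    (hdead : ∀ u, ¬ N u u → ∃ w, pgWhite α β w ∧ pgConn α β u w) (u v : V3 n) :
    live α β u v ↔ N u v := by
  have key : ∀ {u v}, pgConn α β u v → N u u → N u v := fun {u v} c hu =>
    (conn_induct (P := fun v => N u v) (fun _ _ => pgEdge_symm)
      (fun a b e ha => htrans _ _ _ ha (hedge a b e (htrans _ _ _ (hsymm _ _ ha) ha))) c).1 hu
  constructor
  · rintro ⟨c, hw⟩
    refine key c ?_
    by_contra hu
    obtain ⟨w, h1, h2⟩ := hdead u hu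
    exact hw w h1 h2
  · intro h
    refine ⟨hconn _ _ h, fun w hw c => hwhite w hw ?_⟩
    have := key c (htrans _ _ _ h (hsymm _ _ h))
    exact htrans _ _ _ (hsymm _ _ this) this

theorem conn_map {α β α' β' : RP n} (φ : V3 n → V3 n)
    (he : ∀ u v, pgEdge α β u v → pgEdge α' β' (φ u) (φ v)) {u v : V3 n}
    (h : pgConn α β u v) : pgConn α' β' (φ u) (φ v) := by
  induction h with
  | base e => exact .base (he _ _ e)
  | refl => exact .refl _
  | symm _ ih => exact .symm ih
  | trans _ _ ih ih' => exact .trans ih ih'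

/-- A bijection of the three rows preserving edges and white vertices preserves live components. -/
theorem live_map {α β α' β' : RP n} (φ : V3 n ≃ V3 n)
    (he : ∀ u v, pgEdge α β u v ↔ pgEdge α' β' (φ u) (φ v))
    (hw : ∀ u, pgWhite α β u ↔ pgWhite α' β' (φ u)) (u v : V3 n) :
    live α β u v ↔ live α' β' (φ u) (φ v) := by
  have hc : ∀ u v, pgConn α β u v ↔ pgConn α' β' (φ u) (φ v) := fun u v =>
    ⟨conn_map φ fun u v => (he u v).1, fun h => by
      have := conn_map (α' := α) (β' := β) φ.symm (fun u v h => (he _ _).2 (by simpa using h)) h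
      simpa using this⟩
  unfold live
  rw [hc, φ.forall_congr_left]
  simp [hc, hw]

section rows
variable (α β : RP n) (i j : Fin n)

theorem edge_tt : pgEdge α β (.inl i) (.inl j) ↔ α.rel (.inl i) (.inl j) := by
  simp [pgEdge, embA, embB, vTop, vMid, vBot]
theorem edge_tm : pgEdge α β (.inl i) (.inr (.inl j)) ↔ α.rel (.inl i) (.inr j) := by
  simp [pgEdge, embA, embB, vTop, vMid, vBot]
theorem edge_tb : pgEdge α β (.inl i) (.inr (.inr j)) ↔ False := by
  simp [pgEdge, embA, embB, vTop, vMid, vBot]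
theorem edge_mt : pgEdge α β (.inr (.inl i)) (.inl j) ↔ α.rel (.inr i) (.inl j) := by
  simp [pgEdge, embA, embB, vTop, vMid, vBot]
theorem edge_mm : pgEdge α β (.inr (.inl i)) (.inr (.inl j)) ↔
    α.rel (.inr i) (.inr j) ∨ β.rel (.inl i) (.inl j) := by
  simp [pgEdge, embA, embB, vTop, vMid, vBot]
theorem edge_mb : pgEdge α β (.inr (.inl i)) (.inr (.inr j)) ↔ β.rel (.inl i) (.inr j) := by
  simp [pgEdge, embA, embB, vTop, vMid, vBot]
theorem edge_bt : pgEdge α β (.inr (.inr i)) (.inl j) ↔ False := by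
  simp [pgEdge, embA, embB, vTop, vMid, vBot]
theorem edge_bm : pgEdge α β (.inr (.inr i)) (.inr (.inl j)) ↔ β.rel (.inr i) (.inl j) := by
  simp [pgEdge, embA, embB, vTop, vMid, vBot]
theorem edge_bb : pgEdge α β (.inr (.inr i)) (.inr (.inr j)) ↔ β.rel (.inr i) (.inr j) := by
  simp [pgEdge, embA, embB, vTop, vMid, vBot]
theorem white_t : pgWhite α β (.inl i) ↔ ¬ α.rel (.inl i) (.inl i) := by
  simp [pgWhite, vTop, vMid, vBot]
theorem white_m : pgWhite α β (.inr (.inl i)) ↔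
    ¬ α.rel (.inr i) (.inr i) ∨ ¬ β.rel (.inl i) (.inl i) := by
  simp [pgWhite, vTop, vMid, vBot]
theorem white_b : pgWhite α β (.inr (.inr i)) ↔ ¬ β.rel (.inr i) (.inr i) := by
  simp [pgWhite, vTop, vMid, vBot]
end rows

/-- Relabelling of the points: `x` takes the place of its image under `σ` (upper row) or `τ`
(lower row). As products, these are the rook partitions `σ α τ⁻¹`. -/
def act (α : RP n) (σ τ : Equiv.Perm (Fin n)) : RP n where
  rel x y := α.rel (Sum.map σ τ x) (Sum.map σ τ y)
  symm h := α.symm h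
  trans h h' := α.trans h h'

theorem act_act (α : RP n) (σ τ σ' τ' : Equiv.Perm (Fin n)) :
    act (act α σ τ) σ' τ' = act α (σ * σ') (τ * τ') := by
  apply RP.ext_rel; rintro (x | x) (y | y) <;> rfl

theorem act_one (α : RP n) : act α 1 1 = α := by
  apply RP.ext_rel; rintro (x | x) (y | y) <;> rfl

/-- Relabelling the middle row by any `ρ` does not change the product. -/
theorem act_mul (α β : RP n) (σ ρ τ : Equiv.Perm (Fin n)) :
    act (α * β) σ τ = act α σ ρ * act β ρ τ := by
  apply RP.ext_rel
  intro x y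
  change (α * β).rel _ _ ↔ _
  rw [mul_rel, mul_rel, live_map (α := act α σ ρ) (β := act β ρ τ) (α' := α) (β' := β)
    (Equiv.sumCongr σ (Equiv.sumCongr ρ τ))]
  · rcases x with x | x <;> rcases y with y | y <;> rfl
  · rintro (u | u | u) (v | v | v) <;>
      simp [edge_tt, edge_tm, edge_tb, edge_mt, edge_mm, edge_mb, edge_bt, edge_bm, edge_bb, act]
  · rintro (u | u | u) <;> simp [white_t, white_m, white_b, act]

/-- The reflection of a diagram in a horizontal axis, an anti-involution of `RP_n`. -/
def mirror (α : RP n) : RP n where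
  rel x y := α.rel x.swap y.swap
  symm h := α.symm h
  trans h h' := α.trans h h'

theorem mirror_mirror (α : RP n) : mirror (mirror α) = α := by
  apply RP.ext_rel; rintro (x | x) (y | y) <;> rfl

/-- The reflection of the three rows of a product graph. -/
def flip3 : V3 n ≃ V3 n where
  toFun := Sum.elim vBot (Sum.elim vMid vTop)
  invFun := Sum.elim vBot (Sum.elim vMid vTop)
  left_inv := by rintro (u | u | u) <;> rfl
  right_inv := by rintro (u | u | u) <;> rfl

theorem mirror_mul (α β : RP n) : mirror (α * β) = mirror β * mirror α := by
  apply RP.ext_rel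
  intro x y
  change (α * β).rel _ _ ↔ _
  rw [mul_rel, mul_rel, live_map (α := mirror β) (β := mirror α) (α' := α) (β' := β) flip3]
  · rcases x with x | x <;> rcases y with y | y <;> rfl
  · rintro (u | u | u) (v | v | v) <;>
      simp [edge_tt, edge_tm, edge_tb, edge_mt, edge_mm, edge_mb, edge_bt, edge_bm, edge_bb, mirror,
        flip3, vTop, vMid, vBot, or_comm]
  · rintro (u | u | u) <;>
      simp [white_t, white_m, white_b, mirror, flip3, vTop, vMid, vBot, or_comm]

theorem mirror_ebar (i : Fin n) : mirror (ebar i) = ebar i := by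
  apply RP.ext_rel; rintro (x | x) (y | y) <;> simp [mirror, ebar, idx]
theorem mirror_obar (i : Fin n) : mirror (obar i) = obar i := by
  apply RP.ext_rel; rintro (x | x) (y | y) <;> simp [mirror, obar, obarS, idx]
theorem mirror_tbar (i j : Fin n) : mirror (tbar i j) = tbar i j := by
  apply RP.ext_rel; rintro (x | x) (y | y) <;> simp [mirror, tbar, idx]
theorem mirror_one : mirror (1 : RP n) = 1 := by
  apply RP.ext_rel; rintro (x | x) (y | y) <;> rfl

/-! ### Multiplication by the identity and by generators -/

/-- Collapses the top row onto the middle row, so that both rows become the upper row of the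
right-hand factor. -/
def proj : V3 n → Pt n := Sum.elim Sum.inl id

theorem edge_proj {g α : RP n} (hg : ∀ k, g.rel (.inl k) (.inr k)) (u : V3 n) :
    pgConn g α u (.inr (proj u)) := by
  rcases u with u | u
  · exact .base ((edge_tm g α u u).2 (hg u))
  · exact .refl _

theorem one_mul_rp (α : RP n) : (1 : RP n) * α = α := by
  apply RP.ext_rel
  intro x y
  have h1 : ∀ k, (1 : RP n).rel (.inl k) (.inr k) := fun k => rfl
  have hone : ∀ a b, (1 : RP n).rel a b ↔ idx a = idx b := fun a b => Iff.rfl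
  rw [mul_rel, live_eq (fun u v => α.rel (proj u) (proj v))]
  · rcases x with x | x <;> rcases y with y | y <;> rfl
  · exact fun u v => α.symm
  · exact fun u v w => α.trans
  · rintro (u | u | u) (v | v | v) <;> simp [edge_tt, edge_tm, edge_tb, edge_mt, edge_mm, edge_mb,
      edge_bt, edge_bm, edge_bb, hone, idx, proj] <;> grind
  · rintro (u | u | u) <;> simp [white_t, white_m, white_b, hone, proj]
  · intro u v h
    exact (edge_proj h1 u).trans (RClosure.trans (.base (Or.inr
      ⟨_, _, h, by cases proj u <;> rfl, by cases proj v <;> rfl⟩)) (edge_proj h1 v).symm)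
  · intro u hu
    refine ⟨_, ?_, edge_proj h1 u⟩
    cases hp : proj u <;> rw [hp] at hu <;> simp [white_m, white_b, hu]

theorem mul_one_rp (α : RP n) : α * 1 = α := by
  rw [← mirror_mirror (α * 1), mirror_mul, mirror_one, one_mul_rp, mirror_mirror]

/-- Left multiplication by `ō_i` turns the block of the upper point `i` into rook dots. -/
theorem obar_mul (i : Fin n) (α : RP n) (x y : Pt n) :
    (obar i * α).rel x y ↔ α.rel x y ∧ ¬ α.rel x (.inl i) := by
  rw [mul_rel, live_eq (fun u v => α.rel (proj u) (proj v) ∧ ¬ α.rel (proj u) (.inl i))]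
  · rcases x with x | x <;> rcases y with y | y <;> rfl
  · rintro u v ⟨h, h'⟩
    exact ⟨α.symm h, fun h'' => h' (α.trans h h'')⟩
  · rintro u v w ⟨h, h'⟩ ⟨h1, h2⟩
    exact ⟨α.trans h h1, h'⟩
  · rintro (u | u | u) (v | v | v) <;> simp [edge_tt, edge_tm, edge_tb, edge_mt, edge_mm, edge_mb,
      edge_bt, edge_bm, edge_bb, obar, obarS, idx, proj] <;> grind
  · rintro (u | u | u) <;> simp [white_t, white_m, white_b, obar, obarS, idx, proj] <;> grind
  · have hc : ∀ u, ¬ α.rel (proj u) (.inl i) → α.rel (proj u) (proj u) →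
        pgConn (obar i) α u (.inr (proj u)) := by
      rintro (u | u) h h'
      · refine .base ((edge_tm _ α u u).2 ⟨rfl, ?_⟩)
        rintro rfl
        exact h h'
      · exact .refl _
    rintro u v ⟨h, h'⟩
    have hv : α.rel (proj v) (proj v) := α.trans (α.symm h) h
    have hu : α.rel (proj u) (proj u) := α.trans h (α.symm h)
    exact (hc u h' hu).trans (RClosure.trans (.base (Or.inr
      ⟨_, _, h, by cases proj u <;> rfl, by cases proj v <;> rfl⟩))
      (hc v (fun h'' => h' (α.trans h h'')) hv).symm)
  · intro u hu
    by_cases hw : pgWhite (obar i) α u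
    · exact ⟨u, hw, .refl _⟩
    have hc : pgConn (obar i) α u (.inr (proj u)) := by
      rcases u with u | u
      · refine .base ((edge_tm _ α u u).2 ?_)
        rw [white_t, not_not] at hw
        exact ⟨rfl, hw.2⟩
      · exact .refl _
    by_cases h : α.rel (proj u) (proj u)
    · have h2 : α.rel (proj u) (.inl i) := by by_contra h2; exact hu ⟨h, h2⟩
      refine ⟨.inr (.inl i), ?_, hc.trans (.base (Or.inr
        ⟨_, _, h2, by cases proj u <;> rfl, rfl⟩))⟩
      simp [white_m, obar, obarS, idx]
    · refine ⟨_, ?_, hc⟩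
      cases hp : proj u <;> rw [hp] at h <;> simp [white_m, white_b, h]

/-- Left multiplication by `ē_i` cuts the upper point `i` off as a singleton block. -/
theorem ebar_mul (i : Fin n) (α : RP n) (x y : Pt n) :
    (ebar i * α).rel x y ↔
      (x = .inl i ∧ y = .inl i) ∨ (x ≠ .inl i ∧ y ≠ .inl i ∧ α.rel x y) := by
  have hc : ∀ u, u ≠ .inl i → pgConn (ebar i) α u (.inr (proj u)) := by
    rintro (u | u) h
    · refine .base ((edge_tm _ α u u).2 (Or.inr ⟨rfl, ?_⟩))
      rintro rfl
      exact h rfl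
    · exact .refl _
  rw [mul_rel, live_eq (fun u v => (u = .inl i ∧ v = .inl i) ∨
    (u ≠ .inl i ∧ v ≠ .inl i ∧ α.rel (proj u) (proj v)))]
  · rcases x with x | x <;> rcases y with y | y <;> simp [embOut, vTop, vBot, proj]
  · rintro u v (h | ⟨h, h', h2⟩)
    · exact Or.inl h.symm
    · exact Or.inr ⟨h', h, α.symm h2⟩
  · rintro u v w (⟨rfl, rfl⟩ | ⟨h, h', h2⟩) (⟨h3, h4⟩ | ⟨h3, h4, h5⟩)
    · exact Or.inl ⟨rfl, h4⟩
    · exact absurd rfl h3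
    · exact absurd h3 h'
    · exact Or.inr ⟨h, h4, α.trans h2 h5⟩
  · rintro (u | u | u) (v | v | v) <;> simp [edge_tt, edge_tm, edge_tb, edge_mt, edge_mm, edge_mb,
      edge_bt, edge_bm, edge_bb, ebar, idx, proj] <;> grind
  · rintro (u | u | u) <;> simp [white_t, white_m, white_b, ebar, idx, proj]
  · rintro u v (⟨rfl, rfl⟩ | ⟨hu, hv, h⟩)
    · exact .refl _
    exact (hc u hu).trans (RClosure.trans (.base (Or.inr
      ⟨_, _, h, by cases proj u <;> rfl, by cases proj v <;> rfl⟩)) (hc v hv).symm)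
  · intro u hu
    have hui : u ≠ .inl i := fun h => hu (Or.inl ⟨h, h⟩)
    have hu' : ¬ α.rel (proj u) (proj u) := fun h => hu (Or.inr ⟨hui, hui, h⟩)
    refine ⟨_, ?_, hc u hui⟩
    cases hp : proj u <;> rw [hp] at hu' <;> simp [white_m, white_b, hu']

/-- Left multiplication by `t̄_ij` merges the blocks of the upper points `i` and `j`; if one of them
is a rook dot, the block of the other becomes rook dots as well. -/
theorem tbar_mul (i j : Fin n) (α : RP n) (x y : Pt n) :
    (tbar i j * α).rel x y ↔
      (α.rel (.inl i) (.inl i) ∧ α.rel (.inl j) (.inl j) ∧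
        (α.rel x (.inl i) ∨ α.rel x (.inl j)) ∧ (α.rel y (.inl i) ∨ α.rel y (.inl j))) ∨
      (α.rel x y ∧ ¬ α.rel x (.inl i) ∧ ¬ α.rel x (.inl j)) := by
  have h1 : ∀ k, (tbar i j).rel (.inl k) (.inr k) := fun k => Or.inl rfl
  have hc := edge_proj (α := α) h1
  have he : ∀ {a b}, α.rel a b → pgConn (tbar i j) α (.inr a) (.inr b) := fun {a b} h =>
    .base (Or.inr ⟨_, _, h, by cases a <;> rfl, by cases b <;> rfl⟩)
  have hij : pgConn (tbar i j) α (.inr (.inl i)) (.inr (.inl j)) := .base (by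
    rw [edge_mm]; left; simp [tbar, idx])
  have hsymm := α.rel_comm
  have htrans := @RP.trans _ α
  let D : Pt n → Pt n → Prop := fun x y =>
      (α.rel (.inl i) (.inl i) ∧ α.rel (.inl j) (.inl j) ∧
        (α.rel x (.inl i) ∨ α.rel x (.inl j)) ∧ (α.rel y (.inl i) ∨ α.rel y (.inl j))) ∨
      (α.rel x y ∧ ¬ α.rel x (.inl i) ∧ ¬ α.rel x (.inl j))
  rw [mul_rel, live_eq (fun u v => D (proj u) (proj v))]
  · rcases x with x | x <;> rcases y with y | y <;> rfl
  · intro u v; grind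
  · intro u v w; grind
  · rintro (u | u | u) (v | v | v) <;> simp [edge_tt, edge_tm, edge_tb, edge_mt, edge_mm, edge_mb,
      edge_bt, edge_bm, edge_bb, tbar, idx, proj] <;> grind
  · rintro (u | u | u) <;> simp [white_t, white_m, white_b, tbar, idx, proj] <;> grind
  · intro u v h
    refine (hc u).trans (RClosure.trans ?_ (hc v).symm)
    rcases h with ⟨-, -, h | h, h' | h'⟩ | ⟨h, -⟩
    · exact (he h).trans (he h').symm
    · exact (he h).trans (hij.trans (he h').symm)
    · exact (he h).trans (hij.symm.trans (he h').symm)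
    · exact (he h).trans (he h').symm
    · exact he h
  · intro u hu
    by_cases h : α.rel (proj u) (proj u)
    · have : (α.rel (proj u) (.inl i) ∧ ¬ α.rel (.inl j) (.inl j)) ∨
          (α.rel (proj u) (.inl j) ∧ ¬ α.rel (.inl i) (.inl i)) := by grind
      rcases this with ⟨h, h'⟩ | ⟨h, h'⟩
      · exact ⟨.inr (.inl j), by simp [white_m, h'], (hc u).trans ((he h).trans hij)⟩
      · exact ⟨.inr (.inl i), by simp [white_m, h'], (hc u).trans ((he h).trans hij.symm)⟩
    · refine ⟨_, ?_, hc u⟩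
      cases hp : proj u <;> rw [hp] at h <;> simp [white_m, white_b, h]

theorem mul_ebar (i : Fin n) (α : RP n) (x y : Pt n) :
    (α * ebar i).rel x y ↔
      (x = .inr i ∧ y = .inr i) ∨ (x ≠ .inr i ∧ y ≠ .inr i ∧ α.rel x y) := by
  rw [← mirror_mirror (α * ebar i), mirror_mul, mirror_ebar]
  change (ebar i * mirror α).rel x.swap y.swap ↔ _
  rw [ebar_mul]
  rcases x with x | x <;> rcases y with y | y <;> simp [mirror]

theorem mul_obar (i : Fin n) (α : RP n) (x y : Pt n) :
    (α * obar i).rel x y ↔ α.rel x y ∧ ¬ α.rel x (.inr i) := by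
  rw [← mirror_mirror (α * obar i), mirror_mul, mirror_obar]
  change (obar i * mirror α).rel x.swap y.swap ↔ _
  rw [obar_mul]
  rcases x with x | x <;> rcases y with y | y <;> simp [mirror]

/-! ### The generated subsemigroup absorbs permutations -/

theorem tbar_comm (i j : Fin n) : tbar i j = tbar j i := by
  apply RP.ext_rel
  intro x y
  simp only [tbar, or_comm]

theorem sg_ebar (i : Fin n) : SgGen (singGenSet n) (ebar i) :=
  .incl (Or.inl (Or.inl ⟨i, rfl⟩))

theorem sg_obar (i : Fin n) : SgGen (singGenSet n) (obar i) :=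
  .incl (Or.inr ⟨i, rfl⟩)

theorem sg_tbar {i j : Fin n} (h : i ≠ j) : SgGen (singGenSet n) (tbar i j) := by
  rcases lt_or_gt_of_ne h with h | h
  · exact .incl (Or.inl (Or.inr ⟨i, j, h, rfl⟩))
  · rw [tbar_comm]
    exact .incl (Or.inl (Or.inr ⟨j, i, h, rfl⟩))

theorem ebar_idem (i : Fin n) : ebar i * ebar i = ebar i := by
  apply RP.ext_rel
  rintro (x | x) (y | y) <;> rw [ebar_mul] <;> simp [ebar, idx] <;> grind

theorem obar_idem (i : Fin n) : obar i * obar i = obar i := by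
  apply RP.ext_rel
  rintro (x | x) (y | y) <;> rw [obar_mul] <;> simp [obar, obarS, idx]

theorem tbar_idem (i j : Fin n) : tbar i j * tbar i j = tbar i j := by
  apply RP.ext_rel
  rintro (x | x) (y | y) <;> rw [tbar_mul] <;> simp [tbar, idx] <;> grind

theorem obar_sandwich (i : Fin n) : obar i * (ebar i * obar i) = obar i := by
  apply RP.ext_rel
  rintro (x | x) (y | y) <;> rw [obar_mul] <;> simp only [ebar_mul] <;>
    simp [obar, obarS, idx] <;> grind

theorem tbar_sandwich {i j : Fin n} (h : i ≠ j) : tbar i j * (ebar j * tbar i j) = tbar i j := by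
  apply RP.ext_rel
  rintro (x | x) (y | y) <;> rw [tbar_mul] <;> simp only [ebar_mul] <;>
    simp [tbar, idx] <;> grind

/-- The case of `ē_i` times a transposition moving `i`. -/
theorem ebar_swap {i l : Fin n} (h : i ≠ l) :
    act (ebar i) 1 (Equiv.swap i l) = (ebar i * tbar i l) * ebar l := by
  apply RP.ext_rel
  rintro (x | x) (y | y) <;> rw [mul_ebar, ebar_mul] <;>
    simp [act, ebar, tbar, idx, Equiv.swap_apply_def] <;> grind

theorem sg_ebar_swap_left (i l : Fin n) :
    SgGen (singGenSet n) (act (ebar i) 1 (Equiv.swap i l)) := by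
  by_cases h : i = l
  · subst h
    rw [Equiv.swap_self]
    exact (act_one (ebar i)).symm ▸ sg_ebar i
  · rw [ebar_swap h]
    exact .mul (.mul (sg_ebar i) (sg_tbar h)) (sg_ebar l)

theorem sg_act_swap_left (i l k : Fin n)
    (h : SgGen (singGenSet n) (act (ebar l) 1 (Equiv.swap l k))) :
    SgGen (singGenSet n) (act (act (ebar i) 1 (Equiv.swap i l)) 1 (Equiv.swap l k)) := by
  by_cases hil : i = l
  · subst hil
    rw [Equiv.swap_self]
    exact (act_one (ebar i)).symm ▸ h
  · rw [ebar_swap hil, act_mul _ _ 1 1, act_one]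
    exact .mul (.mul (sg_ebar i) (sg_tbar hil)) h

/-- If `i`, `k`, `l` are distinct then `(k l) = (i k)(k l)(l i)`, and along the three factors the index
of the trailing `ē` runs from `i` to `k`, `l` and back to `i`, so that each transposition meets an
`ē` whose index it moves. -/
theorem sg_ebar_swap (i k l : Fin n) :
    SgGen (singGenSet n) (act (ebar i) 1 (Equiv.swap k l)) := by
  by_cases hk : i = k
  · subst hk; exact sg_ebar_swap_left i l
  by_cases hl : i = l
  · subst hl; rw [Equiv.swap_comm]; exact sg_ebar_swap_left i k
  by_cases hkl : k = l
  · subst hkl; rw [Equiv.swap_self]; exact (act_one (ebar i)).symm ▸ sg_ebar i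
  have hdec : Equiv.swap k l = Equiv.swap i k * (Equiv.swap k l * Equiv.swap l i) := by
    ext x
    simp only [Equiv.Perm.mul_apply, Equiv.swap_apply_def]
    grind
  have h2 : act (ebar i) 1 (Equiv.swap k l) =
      act (act (act (ebar i) 1 (Equiv.swap i k)) 1 (Equiv.swap k l)) 1 (Equiv.swap l i) := by
    rw [act_act, act_act, mul_one, mul_one, ← hdec]
  rw [h2, ebar_swap hk, act_mul _ _ 1 1, act_one, act_mul _ _ 1 1, act_one]
  exact .mul (.mul (sg_ebar i) (sg_tbar hk)) (sg_act_swap_left k l i (sg_ebar_swap_left l i))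

/-- Conjugation by a permutation permutes the generators. -/
theorem act_gen {g : RP n} (hg : g ∈ singGenSet n) (σ : Equiv.Perm (Fin n)) :
    SgGen (singGenSet n) (act g σ σ) := by
  rcases hg with (⟨i, rfl⟩ | ⟨i, j, hij, rfl⟩) | ⟨i, rfl⟩
  · convert sg_ebar (σ.symm i) using 1
    apply RP.ext_rel
    rintro (x | x) (y | y) <;> simp [act, ebar, idx, Equiv.eq_symm_apply]
  · convert sg_tbar (i := σ.symm i) (j := σ.symm j) (by simpa using hij.ne) using 1
    apply RP.ext_rel
    rintro (x | x) (y | y) <;> simp [act, tbar, idx, Equiv.eq_symm_apply]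
  · convert sg_obar (σ.symm i) using 1
    apply RP.ext_rel
    rintro (x | x) (y | y) <;> simp [act, obar, obarS, idx, Equiv.eq_symm_apply]

/-- Every generator `g` equals `g ē_i g` for some `i`, which reduces `g σ` to
`g (ē_i σ) (σ⁻¹ g σ)`. -/
theorem gen_sandwich {g : RP n} (hg : g ∈ singGenSet n) : ∃ i, g * (ebar i * g) = g := by
  rcases hg with (⟨i, rfl⟩ | ⟨i, j, hij, rfl⟩) | ⟨i, rfl⟩
  · exact ⟨i, by rw [ebar_idem, ebar_idem]⟩
  · exact ⟨j, tbar_sandwich hij.ne⟩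
  · exact ⟨i, obar_sandwich i⟩

theorem sg_act_right_of_ebar {τ : Equiv.Perm (Fin n)}
    (h : ∀ i, SgGen (singGenSet n) (act (ebar i) 1 τ)) {α : RP n}
    (hα : SgGen (singGenSet n) α) : SgGen (singGenSet n) (act α 1 τ) := by
  induction hα with
  | incl hg =>
    obtain ⟨i, hi⟩ := gen_sandwich hg
    rw [← hi, act_mul _ _ 1 1, act_one, act_mul _ _ 1 τ]
    exact .mul (.incl hg) (.mul (h i) (act_gen hg τ))
  | mul ha _ _ ih =>
    rw [act_mul _ _ 1 1, act_one]
    exact .mul ha ih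

theorem sg_act_right (τ : Equiv.Perm (Fin n)) {α : RP n}
    (hα : SgGen (singGenSet n) α) : SgGen (singGenSet n) (act α 1 τ) := by
  induction τ using Equiv.Perm.swap_induction_on generalizing α with
  | one => rwa [act_one]
  | swap_mul f x y _ ih =>
    have := ih (sg_act_right_of_ebar (fun i => sg_ebar_swap i x y) hα)
    rwa [act_act, mul_one] at this

theorem sg_act (σ τ : Equiv.Perm (Fin n)) {α : RP n}
    (hα : SgGen (singGenSet n) α) : SgGen (singGenSet n) (act α σ τ) := by
  induction hα generalizing σ τ with
  | @incl g hg =>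
    have := sg_act_right (σ⁻¹ * τ) (act_gen hg σ)
    rwa [act_act, mul_one, mul_inv_cancel_left] at this
  | mul _ _ iha ihb =>
    rw [act_mul _ _ σ 1]
    exact .mul (iha _ _) (ihb _ _)

theorem sg_mirror {α : RP n} (hα : SgGen (singGenSet n) α) : SgGen (singGenSet n) (mirror α) := by
  induction hα with
  | incl hg =>
    rcases hg with (⟨i, rfl⟩ | ⟨i, j, hij, rfl⟩) | ⟨i, rfl⟩
    · rw [mirror_ebar]; exact sg_ebar i
    · rw [mirror_tbar]; exact sg_tbar hij.ne
    · rw [mirror_obar]; exact sg_obar i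
  | mul _ _ iha ihb => rw [mirror_mul]; exact .mul ihb iha

theorem permRP_eq_left (σ : Equiv.Perm (Fin n)) : permRP σ = act 1 σ 1 := by
  apply RP.ext_rel; rintro (x | x) (y | y) <;> rfl

theorem permRP_eq_right (σ : Equiv.Perm (Fin n)) : permRP σ = act 1 1 σ⁻¹ := by
  apply RP.ext_rel
  have h : ∀ a b, (1 : RP n).rel a b ↔ idx a = idx b := fun a b => Iff.rfl
  rintro (x | x) (y | y) <;>
    simp [permRP, act, h, idx, Equiv.eq_symm_apply, Equiv.symm_apply_eq]

theorem sg_mul_perm {α : RP n} (hα : SgGen (singGenSet n) α) (σ : Equiv.Perm (Fin n)) :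
    SgGen (singGenSet n) (α * permRP σ) := by
  have := act_mul α 1 1 1 σ⁻¹
  rw [mul_one_rp, act_one, ← permRP_eq_right] at this
  exact this ▸ sg_act _ _ hα

theorem sg_perm_mul {α : RP n} (hα : SgGen (singGenSet n) α) (σ : Equiv.Perm (Fin n)) :
    SgGen (singGenSet n) (permRP σ * α) := by
  have := act_mul 1 α σ 1 1
  rw [one_mul_rp, act_one, ← permRP_eq_left] at this
  exact this ▸ sg_act _ _ hα

/-! ### Every rook partition is a permutation or generated -/

/-- `α` is a product of the generators or a permutation. -/
def Good (α : RP n) : Prop := SgGen (singGenSet n) α ∨ α.IsPermDiag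

theorem good_left {g α : RP n} (hg : SgGen (singGenSet n) g) (hα : Good α) : Good (g * α) := by
  rcases hα with h | ⟨σ, rfl⟩
  · exact Or.inl (.mul hg h)
  · exact Or.inl (sg_mul_perm hg σ)

theorem good_right {g α : RP n} (hg : SgGen (singGenSet n) g) (hα : Good α) : Good (α * g) := by
  rcases hα with h | ⟨σ, rfl⟩
  · exact Or.inl (.mul h hg)
  · exact Or.inl (sg_perm_mul hg σ)

theorem good_mirror {α : RP n} (hα : Good α) : Good (mirror α) := by
  rcases hα with h | ⟨σ, rfl⟩
  · exact Or.inl (sg_mirror h)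
  · refine Or.inr ⟨σ⁻¹, ?_⟩
    apply RP.ext_rel
    rintro (x | x) (y | y) <;>
      simp [permRP, mirror, Equiv.eq_symm_apply, Equiv.symm_apply_eq]

/-- If every upper point lies in a transversal block and no two upper points share a block, then
finiteness makes the induced injection of `[n]` bijective, leaving no room for anything else. -/
theorem isPermDiag_of_matched {α : RP n} (h1 : ∀ i, ∃ j, α.rel (.inl i) (.inr j))
    (h2 : ∀ i j, α.rel (.inl i) (.inl j) → i = j) : α.IsPermDiag := by
  choose f hf using h1
  have hinj : Function.Injective f := fun i j h =>
    h2 i j (α.trans (hf i) (α.symm (h ▸ hf j)))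
  have hbij := Finite.injective_iff_bijective.1 hinj
  have hr : ∀ i j, α.rel (.inl i) (.inr j) ↔ f i = j := by
    refine fun i j => ⟨fun h => ?_, fun h => h ▸ hf i⟩
    obtain ⟨k, rfl⟩ := hbij.2 j
    rw [h2 i k (α.trans h (α.symm (hf k)))]
  refine ⟨Equiv.ofBijective f hbij, RP.ext_rel ?_⟩
  rintro (x | x) (y | y) <;> simp only [permRP, Sum.elim_inl, Sum.elim_inr, Equiv.ofBijective_apply]
  · refine ⟨fun h => congrArg f (h2 _ _ h), fun h => ?_⟩
    rw [hinj h]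
    exact α.trans (hf y) (α.symm (hf y))
  · exact hr x y
  · rw [α.rel_comm, hr]; exact eq_comm
  · obtain ⟨k, rfl⟩ := hbij.2 x
    rw [← hr k y]
    exact α.rel_congr_left (α.symm (hf k))

/-- The case where no two points of the same row share a block: the upper and the lower points
outside the blocks `{i,j'}` are equally numerous. Join such a pair `i`, `j'` by a block; it is cut
again by `ē` or `ō` on either side, according to whether each of the two points is a singleton or a
rook dot. Induction is on the set of unmatched upper points. -/
theorem good_of_discrete (α : RP n) (h1 : ∀ i j, α.rel (.inl i) (.inl j) → i = j)
    (h2 : ∀ i j, α.rel (.inr i) (.inr j) → i = j) : Good α := by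
  induction hU : {i | ∀ j, ¬ α.rel (.inl i) (.inr j)} using WellFoundedLT.induction
    generalizing α with
  | ind U ih =>
  subst hU
  by_cases hm : ∀ i, ∃ j, α.rel (.inl i) (.inr j)
  · exact Or.inr (isPermDiag_of_matched hm h1)
  push Not at hm
  obtain ⟨i, hi⟩ := hm
  -- Otherwise every lower point is matched, injectively, hence so is every upper point.
  obtain ⟨j, hj⟩ : ∃ j, ∀ k, ¬ α.rel (.inl k) (.inr j) := by
    by_contra! hcon
    choose g hg using hcon
    have hinj : Function.Injective g := fun a b h =>
      h2 a b (α.trans (α.symm (hg a)) (h ▸ hg b))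
    obtain ⟨k, rfl⟩ := (Finite.injective_iff_surjective.1 hinj) i
    exact hi k (hg k)
  -- `α'` is `α` with `i` and `j'` joined into one block.
  let α' : RP n :=
    { rel := fun x y => ((x = .inl i ∨ x = .inr j) ∧ (y = .inl i ∨ y = .inr j)) ∨
        (¬ (x = .inl i ∨ x = .inr j) ∧ ¬ (y = .inl i ∨ y = .inr j) ∧ α.rel x y)
      symm := by
        intro x y h
        have := α.rel_comm x y
        tauto
      trans := by
        intro x y z h h'
        have := @RP.trans _ α x y z
        tauto }
  have hsymm := α.rel_comm
  have hgood : Good α' := by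
    refine ih _ ?_ α' ?_ ?_ rfl
    · refine (Set.ssubset_iff_of_subset ?_).2 ⟨i, hi, ?_⟩
      · intro k hk l hl
        by_cases hki : k = i
        · subst hki; exact hi l hl
        by_cases hlj : l = j
        · subst hlj; exact hj k hl
        exact hk l (Or.inr ⟨by simpa using hki, by simpa using hlj, hl⟩)
      · intro h
        exact h j (Or.inl ⟨Or.inl rfl, Or.inr rfl⟩)
    · intro a b h
      simp [α'] at h
      grind
    · intro a b h
      simp [α'] at h
      grind
  have hi0 : ∀ z, α.rel (.inl i) z → z = .inl i := by
    rintro (z | z) h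
    · rw [h1 _ _ h]
    · exact absurd h (hi z)
  have hj0 : ∀ z, α.rel (.inr j) z → z = .inr j := by
    rintro (z | z) h
    · exact absurd (α.symm h) (hj z)
    · rw [h2 _ _ h]
  have hα' : ∀ x y, α'.rel x y ↔ ((x = .inl i ∨ x = .inr j) ∧ (y = .inl i ∨ y = .inr j)) ∨
        (¬ (x = .inl i ∨ x = .inr j) ∧ ¬ (y = .inl i ∨ y = .inr j) ∧ α.rel x y) :=
    fun _ _ => Iff.rfl
  clear_value α'
  by_cases hii : α.rel (.inl i) (.inl i) <;> by_cases hjj : α.rel (.inr j) (.inr j)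
  · have : α = (ebar i * α') * ebar j := by
      apply RP.ext_rel
      intro x y
      simp only [mul_ebar, ebar_mul, hα']
      grind
    exact this ▸ good_right (sg_ebar j) (good_left (sg_ebar i) hgood)
  · have : α = (ebar i * α') * obar j := by
      apply RP.ext_rel
      intro x y
      simp only [mul_obar, ebar_mul, hα']
      grind
    exact this ▸ good_right (sg_obar j) (good_left (sg_ebar i) hgood)
  · have : α = (obar i * α') * ebar j := by
      apply RP.ext_rel
      intro x y
      simp only [mul_ebar, obar_mul, hα']
      grind
    exact this ▸ good_right (sg_ebar j) (good_left (sg_obar i) hgood)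
  · have : α = (obar i * α') * obar j := by
      apply RP.ext_rel
      intro x y
      simp only [mul_obar, obar_mul, hα']
      grind
    exact this ▸ good_right (sg_obar j) (good_left (sg_obar i) hgood)

/-- If the upper points `i` and `j` share a block, `i` can be cut off and then glued back. -/
theorem split_top {α : RP n} {i j : Fin n} (hij : i ≠ j) (h : α.rel (.inl i) (.inl j)) :
    tbar i j * (ebar i * α) = α := by
  have hsymm := α.rel_comm
  have htrans := @RP.trans _ α
  apply RP.ext_rel
  intro x y
  simp only [tbar_mul, ebar_mul]
  grind

theorem split_bot {α : RP n} {i j : Fin n} (hij : i ≠ j) (h : α.rel (.inr i) (.inr j)) :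
    (α * ebar i) * tbar i j = α := by
  have := congrArg mirror (split_top hij (α := mirror α) h)
  simpa only [mirror_mul, mirror_tbar, mirror_ebar, mirror_mirror] using this

/-- Induction on the set of related pairs: points of one row sharing a block are separated by
`split_top` and `split_bot` until `good_of_discrete` applies. -/
theorem good_all (α : RP n) : Good α := by
  induction hU : {p : Pt n × Pt n | α.rel p.1 p.2} using WellFoundedLT.induction
    generalizing α with
  | ind U ih =>
  subst hU
  by_cases h1 : ∀ i j, α.rel (.inl i) (.inl j) → i = j
  · by_cases h2 : ∀ i j, α.rel (.inr i) (.inr j) → i = j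
    · exact good_of_discrete α h1 h2
    push Not at h2
    obtain ⟨i, j, h, hij⟩ := h2
    rw [← split_bot hij h]
    refine good_right (sg_tbar hij) (ih _ ?_ _ rfl)
    refine (Set.ssubset_iff_of_subset ?_).2 ⟨(.inr i, .inr j), h, ?_⟩
    · rintro ⟨x, y⟩ hxy
      rcases (mul_ebar i α x y).1 hxy with ⟨rfl, rfl⟩ | ⟨-, -, hxy⟩
      · exact α.trans h (α.symm h)
      · exact hxy
    · intro hxy
      rcases (mul_ebar i α _ _).1 hxy with ⟨-, hx⟩ | ⟨hx, -⟩
      · exact hij (Sum.inr.inj hx).symm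
      · exact hx rfl
  · push Not at h1
    obtain ⟨i, j, h, hij⟩ := h1
    rw [← split_top hij h]
    refine good_left (sg_tbar hij) (ih _ ?_ _ rfl)
    refine (Set.ssubset_iff_of_subset ?_).2 ⟨(.inl i, .inl j), h, ?_⟩
    · rintro ⟨x, y⟩ hxy
      rcases (ebar_mul i α x y).1 hxy with ⟨rfl, rfl⟩ | ⟨-, -, hxy⟩
      · exact α.trans h (α.symm h)
      · exact hxy
    · intro hxy
      rcases (ebar_mul i α _ _).1 hxy with ⟨-, hx⟩ | ⟨hx, -⟩
      · exact hij (Sum.inl.inj hx).symm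
      · exact hx rfl

/-! ### Generated elements are singular -/

/-- If `αβ` is a permutation, every upper point is joined to the lower row in `Γ(α,β)`, so it leaves
the upper row through a transversal block of `α`; hence `α` is itself a permutation. -/
theorem isPermDiag_left_of_mul {α β : RP n} (h : (α * β).IsPermDiag) : α.IsPermDiag := by
  obtain ⟨σ, hσ⟩ := h
  have hr : ∀ x y, live α β (embOut x) (embOut y) ↔ (permRP σ).rel x y := fun x y => by
    rw [← hσ, mul_rel]
  refine isPermDiag_of_matched (fun i => ?_) (fun i j hij => ?_)
  · have hc : pgConn α β (.inl i) (.inr (.inr (σ i))) :=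
      ((hr (.inl i) (.inr (σ i))).2 rfl).1
    by_contra! hcon
    have := (conn_induct (P := fun v => v = .inl i ∨ ∃ k, v = .inl k ∧ α.rel (.inl i) (.inl k))
      (fun _ _ => pgEdge_symm) ?_ hc).1 (Or.inl rfl)
    · simp at this
    -- The top points in the `α`-class of `i` form a union of components.
    · rintro u (v | v | v) he (rfl | ⟨k, rfl, hk⟩)
      · exact Or.inr ⟨v, rfl, (edge_tt α β _ _).1 he⟩
      · exact Or.inr ⟨v, rfl, α.trans hk ((edge_tt α β _ _).1 he)⟩
      · exact absurd ((edge_tm α β _ _).1 he) (hcon v)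
      · exact absurd (α.trans hk ((edge_tm α β _ _).1 he)) (hcon v)
      · exact ((edge_tb α β _ _).1 he).elim
      · exact ((edge_tb α β _ _).1 he).elim
  · have hi : live α β (.inl i) (.inl i) := (hr (.inl i) (.inl i)).2 rfl
    have : (permRP σ).rel (.inl i) (.inl j) :=
      (hr _ _).1 ⟨.base ((edge_tt α β i j).2 hij), hi.2⟩
    exact σ.injective this

theorem not_isPermDiag_gen {g : RP n} (hg : g ∈ singGenSet n) : ¬ g.IsPermDiag := by
  rintro ⟨σ, hσ⟩
  have hr : ∀ x y, g.rel x y ↔ (permRP σ).rel x y := fun x y => by rw [hσ]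
  rcases hg with (⟨i, rfl⟩ | ⟨i, j, hij, rfl⟩) | ⟨i, rfl⟩
  · have := (hr (.inl i) (.inr (σ i))).2 rfl
    simp [ebar, idx] at this
  · exact hij.ne (σ.injective ((hr (.inl i) (.inl j)).1 (Or.inr ⟨Or.inl rfl, Or.inr rfl⟩)))
  · exact ((hr (.inl i) (.inl i)).2 rfl).2 rfl

theorem sg_not_isPermDiag {α : RP n} (h : SgGen (singGenSet n) α) : ¬ α.IsPermDiag := by
  induction h with
  | incl hg => exact not_isPermDiag_gen hg
  | mul _ _ ih _ => exact fun h => ih (isPermDiag_left_of_mul h)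

end Proof

/-- the singular part `RP_n ∖ S_n` is generated, as a semigroup, by
`{ē_1,…,ē_n} ∪ {t̄_ij : 1 ≤ i < j ≤ n} ∪ {ō_1,…,ō_n}`; in particular, since each of these
generators is an idempotent, `RP_n ∖ S_n` is generated by its idempotents. -/
theorem stmt2 (n : ℕ) (hn : 1 ≤ n) :
    (∀ x ∈ singGenSet n, x * x = x) ∧
    (∀ α : RP n, ¬ α.IsPermDiag ↔ SgGen (singGenSet n) α) := by
  refine ⟨?_, fun α => ⟨fun h => (good_all α).resolve_right h, sg_not_isPermDiag⟩⟩
  rintro x ((⟨i, rfl⟩ | ⟨i, j, -, rfl⟩) | ⟨i, rfl⟩)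
  · exact ebar_idem i
  · exact tbar_idem i j
  · exact obar_idem i

end RookPaper
end

section
/- Let w ∈ (E∪T)* and i ∈ [n]. Then w o_i e_i ~ w₁ w₂ w₃ for some words w₁, w₃ ∈ O* and w₂ ∈ (E∪T)*. -/
/-!
The statement holds for every word over `E ∪ T ∪ O`, not only for `w o_i e_i`: each is congruent
to some `w₁ w₂ w₃` with `w₁, w₃ ∈ O*` and `w₂ ∈ (E ∪ T)*`, where moreover `w₂` has at most as many
letters from `E` as the original word. This is `exists_normalForm`, proved by strong induction on
the number of `E`-letters and, inside that, by appending letters on the right. Appending a letter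
of `O` or `T` is harmless, since (R16) moves `T` to the left of `O`. Appending `e_k` to `w₁ w₂ w₃`
is harmless too unless `w₃` contains `o_k`, and then `w₂ o_k e_k` has to be rewritten
(`oWord_mul_e`).

The rewriting is `push_o_left`. If `w₂` has no letter `e_k`, then `o_k` commutes with all of `w₂`
and can be moved into `w₁`. Otherwise write `w₂ = w' e_k v` with no `e_k` in `v`. In the presence
of `o_k`, (R17) turns each `t_kj` of `v` into `o_j`, which gives a word `v'` commuting with `e_k`
and satisfying `o_k v ~ o_k v'`. Hence
`w₂ o_k e_k ~ w' e_k o_k v e_k ~ w' e_k o_k v' e_k ~ w' e_k o_k e_k v' ~ w' e_k v'`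
by (R15). The last word has new `O`-letters inside, but one `E`-letter less than
`w₂ o_k e_k`, so the induction hypothesis applies to it.
-/

namespace RookPaper

/-! ## The alphabet E ∪ T ∪ O and the relations (R1)–(R17) -/

/-- The alphabet `E ∪ T ∪ O`: letters `e_i` (`i ∈ [n]`), `t_ij` (`1 ≤ i < j ≤ n`,
with the convention `t_ij = t_ji`), and `o_i` (`i ∈ [n]`). -/
inductive ETO (n : ℕ) : Type
  | e : Fin n → ETO n
  | t : (i j : Fin n) → i < j → ETO n
  | o : Fin n → ETO n

/-- The letter `t_ij = t_ji`, for distinct `i, j`. -/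
def tg {n : ℕ} (i j : Fin n) (h : i ≠ j) : ETO n :=
  if hlt : i < j then ETO.t i j hlt else ETO.t j i (h.symm.lt_of_le (not_lt.mp hlt))

/-- The letter `t_ij` when `i ≠ j`, and the empty word when `i = j`. -/
def tgd {n : ℕ} (i j : Fin n) : List (ETO n) :=
  if h : i = j then [] else [tg i j h]

/-- `x` is a letter of `E ∪ T`. -/
def ETO.isET {n : ℕ} : ETO n → Prop
  | .o _ => False
  | _ => True

/-- `x` is a letter of `O`. -/
def ETO.isO {n : ℕ} : ETO n → Prop
  | .o _ => True
  | _ => False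

/-- The relations (R1)–(R17). -/
inductive RelETO (n : ℕ) : List (ETO n) → List (ETO n) → Prop
  | r1 (i : Fin n) : RelETO n [.e i, .e i] [.e i]
  | r2 (i j : Fin n) (h : i ≠ j) : RelETO n [.e i, .e j] [.e j, .e i]
  | r3 (i j : Fin n) (h : i ≠ j) : RelETO n [tg i j h, tg i j h] [tg i j h]
  | r4 (i j k l : Fin n) (hij : i ≠ j) (hkl : k ≠ l) :
      RelETO n [tg i j hij, tg k l hkl] [tg k l hkl, tg i j hij]
  | r5 (i j k : Fin n) (hij : i ≠ j) (hjk : j ≠ k) (hik : i ≠ k) :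
      RelETO n [tg i j hij, tg j k hjk] [tg j k hjk, tg k i hik.symm]
  | r6 (i j k : Fin n) (hij : i ≠ j) (hki : k ≠ i) (hkj : k ≠ j) :
      RelETO n [tg i j hij, .e k] [.e k, tg i j hij]
  | r7 (i j k : Fin n) (hij : i ≠ j) (hk : k = i ∨ k = j) :
      RelETO n [tg i j hij, .e k, tg i j hij] [tg i j hij]
  | r8 (i j k : Fin n) (hij : i ≠ j) (hk : k = i ∨ k = j) :
      RelETO n [.e k, tg i j hij, .e k] [.e k]
  | r9 (i j k : Fin n) (hij : i ≠ j) (hjk : j ≠ k) (hik : i ≠ k) :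
      RelETO n [.e k, tg k i hik.symm, .e i, tg i j hij, .e j, tg j k hjk, .e k]
               [.e k, tg k j hjk.symm, .e j, tg j i hij.symm, .e i, tg i k hik, .e k]
  | r10 (i j k l : Fin n) (hij : i ≠ j) (hik : i ≠ k) (hil : i ≠ l)
        (hjk : j ≠ k) (hjl : j ≠ l) (hkl : k ≠ l) :
      RelETO n [.e k, tg k i hik.symm, .e i, tg i j hij, .e j, tg j l hjl, .e l,
                  tg l k hkl.symm, .e k]
               [.e k, tg k l hkl, .e l, tg l i hil.symm, .e i, tg i j hij, .e j,
                  tg j k hjk, .e k]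
  | r11 (i : Fin n) : RelETO n [.o i, .o i] [.o i]
  | r12 (i j : Fin n) (h : i ≠ j) : RelETO n [.o i, .o j] [.o j, .o i]
  | r13 (i j : Fin n) (h : i ≠ j) : RelETO n [.o i, .e j] [.e j, .o i]
  | r14 (i : Fin n) : RelETO n [.o i, .e i, .o i] [.o i]
  | r15 (i : Fin n) : RelETO n [.e i, .o i, .e i] [.e i]
  | r16 (i j k : Fin n) (hij : i ≠ j) : RelETO n [tg i j hij, .o k] [.o k, tg i j hij]
  | r17a (i j : Fin n) (h : i ≠ j) : RelETO n [tg i j h, .o i] [.o i, .o j]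
  | r17b (i j : Fin n) (h : i ≠ j) : RelETO n [tg i j h, .o j] [.o i, .o j]

/-- The map `Φ` on letters. -/
def phiLetter {n : ℕ} : ETO n → RP n
  | .e i => ebar i
  | .t i j _ => tbar i j
  | .o i => obar i

/-- The homomorphism `Φ : (E ∪ T ∪ O)⁺ → RP_n`. -/
def PhiETO {n : ℕ} : List (ETO n) → RP n := evalWord phiLetter

/-- For `A = {i₁ < ⋯ < i_k} ⊆ [n]`, the word `o_A = o_{i₁} ⋯ o_{i_k}`. -/
def oWord {n : ℕ} (A : Finset (Fin n)) : List (ETO n) :=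
  (A.sort (· ≤ ·)).map ETO.o

/-- The chain of `t`-letters along consecutive members of a list. -/
def tChain {n : ℕ} : List (Fin n) → List (ETO n)
  | a :: b :: rest => tgd a b ++ tChain (b :: rest)
  | _ => []

/-- For `A = {i₁ < ⋯ < i_k} ⊆ [n]`, the word `t_A = t_{i₁i₂} t_{i₂i₃} ⋯ t_{i_{k-1}i_k}`
(the empty word if `|A| ≤ 1`). -/
def tWord {n : ℕ} (A : Finset (Fin n)) : List (ETO n) :=
  tChain (A.sort (· ≤ ·))

/-- The word `e_ij = e_i t_ij e_j` for distinct `i, j`. -/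
def eWord {n : ℕ} (i j : Fin n) (h : i ≠ j) : List (ETO n) :=
  [ETO.e i, tg i j h, ETO.e j]

/-- `α` lies in (the copy inside `RP_n` of) the symmetric inverse monoid `I_n`:
no rook dots, and every block has at most one upper and at most one lower point. -/
def RP.MemIn {n : ℕ} (α : RP n) : Prop :=
  α.NoDots ∧ (∀ i j : Fin n, α.rel (Sum.inl i) (Sum.inl j) → i = j) ∧
    (∀ i j : Fin n, α.rel (Sum.inr i) (Sum.inr j) → i = j)

section

variable {n : ℕ}

/-! ### The presented monoid and its relations -/

/-- The congruence generated by (R1)–(R17), as a `Con` on the free monoid of words. -/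
def etoCon (n : ℕ) : Con (FreeMonoid (ETO n)) where
  r u v := CongGen (RelETO n) u.toList v.toList
  iseqv := ⟨fun _ => .refl _, .symm, .trans⟩
  mul' h h' := CongGen.mul h h'

/-- The class of a word in the monoid presented by (R1)–(R17). -/
def cls (u : List (ETO n)) : (etoCon n).Quotient := ((FreeMonoid.ofList u : FreeMonoid (ETO n)) : _)

lemma cls_eq {u v : List (ETO n)} : cls u = cls v ↔ CongGen (RelETO n) u v :=
  (etoCon n).eq

lemma cls_append (u v : List (ETO n)) : cls (u ++ v) = cls u * cls v := rfl

lemma cls_cons (x : ETO n) (v : List (ETO n)) : cls (x :: v) = cls [x] * cls v := rfl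

lemma cls_nil : cls ([] : List (ETO n)) = 1 := rfl

lemma cls_rel {u v : List (ETO n)} (h : RelETO n u v) : cls u = cls v := cls_eq.2 (.rel h)

lemma tg_of_lt {i j : Fin n} (h : i < j) : tg i j h.ne = ETO.t i j h := by simp [tg, h]

lemma e_comm (i j : Fin n) : Commute (cls [ETO.e i]) (cls [ETO.e j]) := by
  rcases eq_or_ne i j with rfl | h
  · exact Commute.refl _
  · exact cls_rel (.r2 i j h)

lemma o_comm (i j : Fin n) : Commute (cls [ETO.o i]) (cls [ETO.o j]) := by
  rcases eq_or_ne i j with rfl | h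
  · exact Commute.refl _
  · exact cls_rel (.r12 i j h)

lemma o_e_comm {i j : Fin n} (h : i ≠ j) : Commute (cls [ETO.o i]) (cls [ETO.e j]) :=
  cls_rel (.r13 i j h)

lemma t_o_comm {i j : Fin n} (h : i < j) (k : Fin n) :
    Commute (cls [ETO.t i j h]) (cls [ETO.o k]) := by
  have := cls_rel (.r16 i j k h.ne)
  rwa [tg_of_lt h] at this

lemma t_e_comm {i j : Fin n} (h : i < j) {k : Fin n} (hi : k ≠ i) (hj : k ≠ j) :
    Commute (cls [ETO.t i j h]) (cls [ETO.e k]) := by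
  have := cls_rel (.r6 i j k h.ne hi hj)
  rwa [tg_of_lt h] at this

lemma o_mul_t_left {i j : Fin n} (h : i < j) :
    cls [ETO.o i] * cls [ETO.t i j h] = cls [ETO.o i] * cls [ETO.o j] := by
  have := cls_rel (.r17a i j h.ne)
  rw [tg_of_lt h] at this
  exact (t_o_comm h i).eq.symm.trans this

lemma o_mul_t_right {i j : Fin n} (h : i < j) :
    cls [ETO.o j] * cls [ETO.t i j h] = cls [ETO.o j] * cls [ETO.o i] := by
  have := cls_rel (.r17b i j h.ne)
  rw [tg_of_lt h] at this
  exact ((t_o_comm h j).eq.symm.trans this).trans (o_comm i j).eq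

/-! ### Counting letters from `E` -/

/-- Whether a letter belongs to `E`. -/
def isE : ETO n → Bool
  | .e _ => true
  | _ => false

/-- The number of letters of a word that belong to `E`. -/
def eCount (u : List (ETO n)) : ℕ := u.countP isE

lemma eCount_append (u v : List (ETO n)) : eCount (u ++ v) = eCount u + eCount v :=
  List.countP_append

lemma eCount_cons (x : ETO n) (v : List (ETO n)) :
    eCount (x :: v) = eCount v + if isE x then 1 else 0 := List.countP_cons

lemma eCount_of_isO {u : List (ETO n)} (h : ∀ x ∈ u, ETO.isO x) : eCount u = 0 := by
  rw [eCount, List.countP_eq_zero]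
  intro x hx
  have := h x hx
  cases x <;> simp_all [ETO.isO, isE]

/-! ### Rewriting `w o_k e_k` -/

/-- The dichotomy behind the rewriting of `w o_k e_k` for `w ∈ (E ∪ T)*`. The first alternative
arises when `e_k` does not occur in `w`; it also provides a word `v`, obtained by replacing each
`t_kj` with `o_j`, that may stand for `w` after `o_k` and commutes with `e_k`. The second arises
when `e_k` occurs in `w`. -/
lemma push_o_left (k : Fin n) (w : List (ETO n)) (hw : ∀ x ∈ w, ETO.isET x) :
    (Commute (cls w) (cls [ETO.o k]) ∧ ∃ v, eCount v ≤ eCount w ∧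
      cls [ETO.o k] * cls w = cls [ETO.o k] * cls v ∧ Commute (cls v) (cls [ETO.e k])) ∨
    ∃ z, eCount z ≤ eCount w ∧ cls w * cls [ETO.o k] * cls [ETO.e k] = cls z := by
  induction w with
  | nil =>
    exact Or.inl ⟨Commute.one_left _, [], le_rfl, rfl, Commute.one_left _⟩
  | cons x l ih =>
    rcases ih (fun y hy => hw y (List.mem_cons_of_mem _ hy)) with
      ⟨hc, v, hv, hov, hve⟩ | ⟨z, hz, hze⟩
    · -- A letter `x` commuting with `o_k` is handled by any letter `y` with `o_k x = o_k y` that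
      -- commutes with `o_k` and `e_k`.
      have step (y : ETO n) (hx : Commute (cls [x]) (cls [ETO.o k]))
          (hxy : cls [ETO.o k] * cls [x] = cls [ETO.o k] * cls [y])
          (hyo : Commute (cls [y]) (cls [ETO.o k])) (hye : Commute (cls [y]) (cls [ETO.e k]))
          (hcount : isE y → isE x) :
          Commute (cls (x :: l)) (cls [ETO.o k]) ∧ ∃ v, eCount v ≤ eCount (x :: l) ∧
            cls [ETO.o k] * cls (x :: l) = cls [ETO.o k] * cls v ∧
            Commute (cls v) (cls [ETO.e k]) := by
        refine ⟨?_, y :: v, ?_, ?_, ?_⟩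
        · rw [cls_cons]; exact hx.mul_left hc
        · rw [eCount_cons, eCount_cons]; split_ifs <;> grind
        · rw [cls_cons x, cls_cons y, ← mul_assoc, hxy, ← mul_assoc, ← hyo.eq, mul_assoc, hov,
            mul_assoc]
        · rw [cls_cons]; exact hye.mul_left hve
      cases x with
      | e i =>
        rcases eq_or_ne k i with rfl | h
        · right
          refine ⟨ETO.e k :: v, ?_, ?_⟩
          · rw [eCount_cons, eCount_cons]; omega
          · have h15 : cls [ETO.e k] * cls [ETO.o k] * cls [ETO.e k] = cls [ETO.e k] :=
              cls_rel (.r15 k)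
            calc cls (ETO.e k :: l) * cls [ETO.o k] * cls [ETO.e k]
                = cls [ETO.e k] * (cls l * cls [ETO.o k]) * cls [ETO.e k] := by
                  rw [cls_cons]; simp only [mul_assoc]
              _ = cls [ETO.e k] * cls [ETO.o k] * (cls v * cls [ETO.e k]) := by
                  rw [hc.eq, hov]; simp only [mul_assoc]
              _ = cls [ETO.e k] * cls [ETO.o k] * cls [ETO.e k] * cls v := by
                  rw [hve.eq]; simp only [mul_assoc]
              _ = cls (ETO.e k :: v) := by rw [h15, cls_cons (ETO.e k) v]
        · exact Or.inl (step (.e i) (o_e_comm h).symm rfl (o_e_comm h).symm (e_comm i k) id)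
      | t i j hij =>
        left
        rcases eq_or_ne k i with rfl | hi
        · exact step (.o j) (t_o_comm hij _) (o_mul_t_left hij) (o_comm _ _)
            (o_e_comm hij.ne') (by simp [isE])
        rcases eq_or_ne k j with rfl | hj
        · exact step (.o i) (t_o_comm hij _) (o_mul_t_right hij) (o_comm _ _)
            (o_e_comm hij.ne) (by simp [isE])
        · exact step (.t i j hij) (t_o_comm hij _) rfl (t_o_comm hij _)
            (t_e_comm hij hi hj) id
      | o i => exact (hw (.o i) (by simp)).elim
    · right
      refine ⟨x :: z, ?_, ?_⟩
      · rw [eCount_cons, eCount_cons]; omega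
      · rw [cls_cons x l, cls_cons x z, ← hze]; simp only [mul_assoc]

/-- A word over `O` followed by `e_k`: all letters but `o_k` can be moved to the right of `e_k`,
and the copies of `o_k` collapse to at most one. -/
lemma oWord_mul_e (k : Fin n) (w : List (ETO n)) (hw : ∀ x ∈ w, ETO.isO x) :
    cls w * cls [ETO.e k] = cls [ETO.e k] * cls w ∨
    ∃ w', (∀ x ∈ w', ETO.isO x) ∧
      cls w * cls [ETO.e k] = cls [ETO.o k] * cls [ETO.e k] * cls w' := by
  induction w with
  | nil => left; simp [cls_nil]
  | cons x l ih =>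
    have hl : ∀ y ∈ l, ETO.isO y := fun y hy => hw y (List.mem_cons_of_mem _ hy)
    cases x with
    | o j =>
      rw [cls_cons]
      rcases ih hl with h | ⟨w', hw', h⟩
      · rcases eq_or_ne j k with rfl | hjk
        · right
          exact ⟨l, hl, by rw [mul_assoc, h, mul_assoc]⟩
        · left
          rw [mul_assoc, h, ← mul_assoc, (o_e_comm hjk).eq, mul_assoc]
      · right
        rcases eq_or_ne j k with rfl | hjk
        · refine ⟨w', hw', ?_⟩
          have h11 : cls [ETO.o j] * cls [ETO.o j] = cls [ETO.o j] := cls_rel (.r11 j)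
          rw [mul_assoc, h, ← mul_assoc, ← mul_assoc, h11]
        · refine ⟨ETO.o j :: w', ?_, ?_⟩
          · simpa [ETO.isO] using hw'
          · rw [mul_assoc, h, cls_cons (ETO.o j) w', ← mul_assoc,
              ((o_comm j k).mul_right (o_e_comm hjk)).eq, mul_assoc]
    | e j => exact (hw (.e j) (by simp)).elim
    | t i j h => exact (hw (.t i j h) (by simp)).elim

/-- Words over `O` commute with the letters of `T`. -/
lemma oWord_mul_t {i j : Fin n} (h : i < j) (w : List (ETO n)) (hw : ∀ x ∈ w, ETO.isO x) :
    Commute (cls w) (cls [ETO.t i j h]) := by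
  induction w with
  | nil => exact Commute.one_left _
  | cons x l ih =>
    have hl := ih fun y hy => hw y (List.mem_cons_of_mem _ hy)
    rw [cls_cons]
    cases x with
    | o k => exact (t_o_comm h k).symm.mul_left hl
    | e k => exact (hw (.e k) (by simp)).elim
    | t a b hab => exact (hw (.t a b hab) (by simp)).elim

/-! ### Normal forms -/

/-- Every word over `E ∪ T ∪ O` is congruent to some `w₁ w₂ w₃` with `w₁, w₃ ∈ O*` and
`w₂ ∈ (E ∪ T)*`. The bound on the number of `E`-letters of `w₂` is what drives the induction. -/
theorem exists_normalForm (m : ℕ) (u : List (ETO n)) (hu : eCount u ≤ m) :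
    ∃ w1 w2 w3 : List (ETO n),
      (∀ x ∈ w1, ETO.isO x) ∧ (∀ x ∈ w2, ETO.isET x) ∧ (∀ x ∈ w3, ETO.isO x) ∧
      eCount w2 ≤ m ∧ cls u = cls w1 * cls w2 * cls w3 := by
  induction m using Nat.strong_induction_on generalizing u with
  | _ m IH =>
  induction u using List.reverseRecOn with
  | nil => exact ⟨[], [], [], by simp, by simp, by simp, hu, by simp [cls_nil]⟩
  | append_singleton u x ih =>
    rw [eCount_append] at hu
    cases x with
    | o k =>
      obtain ⟨w1, w2, w3, h1, h2, h3, hm, h⟩ := ih (by omega)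
      refine ⟨w1, w2, w3 ++ [.o k], h1, h2, ?_, hm, ?_⟩
      · intro y hy
        rcases List.mem_append.1 hy with hy | hy
        · exact h3 y hy
        · rw [List.mem_singleton.1 hy]; trivial
      · rw [cls_append, cls_append, h, mul_assoc _ (cls w3)]
    | t i j hij =>
      obtain ⟨w1, w2, w3, h1, h2, h3, hm, h⟩ := ih (by omega)
      refine ⟨w1, w2 ++ [.t i j hij], w3, h1, ?_, h3, ?_, ?_⟩
      · intro y hy
        rcases List.mem_append.1 hy with hy | hy
        · exact h2 y hy
        · rw [List.mem_singleton.1 hy]; trivial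
      · simpa [eCount_append, eCount, isE] using hm
      · rw [cls_append, cls_append, h, mul_assoc, (oWord_mul_t hij w3 h3).eq]
        simp only [mul_assoc]
    | e k =>
      have hk : eCount [ETO.e k] = 1 := rfl
      rw [hk] at hu
      obtain ⟨w1, w2, w3, h1, h2, h3, hm, h⟩ := IH (eCount u) (by omega) u le_rfl
      have hET : ∀ y ∈ w2 ++ [ETO.e k], ETO.isET y := by
        intro y hy
        rcases List.mem_append.1 hy with hy | hy
        · exact h2 y hy
        · rw [List.mem_singleton.1 hy]; trivial
      have hcount : eCount (w2 ++ [ETO.e k]) ≤ m := by rw [eCount_append, hk]; omega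
      rcases oWord_mul_e k w3 h3 with hc | ⟨w3', h3', hc⟩
      · refine ⟨w1, w2 ++ [.e k], w3, h1, hET, h3, hcount, ?_⟩
        rw [cls_append, cls_append, h, mul_assoc, hc]
        simp only [mul_assoc]
      · have key : cls (u ++ [ETO.e k]) =
            cls w1 * (cls w2 * cls [ETO.o k] * cls [ETO.e k]) * cls w3' := by
          rw [cls_append, h, mul_assoc, hc]
          simp only [mul_assoc]
        rcases push_o_left k w2 h2 with ⟨hcomm, -⟩ | ⟨z, hz, hze⟩
        · refine ⟨w1 ++ [.o k], w2 ++ [.e k], w3', ?_, hET, h3', hcount, ?_⟩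
          · intro y hy
            rcases List.mem_append.1 hy with hy | hy
            · exact h1 y hy
            · rw [List.mem_singleton.1 hy]; trivial
          · rw [key, hcomm.eq, cls_append, cls_append]
            simp only [mul_assoc]
        · -- The rewritten word has no more `E`-letters than `u`.
          have hlt : eCount (w1 ++ z ++ w3') ≤ eCount u := by
            rw [eCount_append, eCount_append, eCount_of_isO h1, eCount_of_isO h3']; omega
          obtain ⟨a, b, c, ha, hb, hc', hm', h'⟩ := IH (eCount u) (by omega) _ hlt
          refine ⟨a, b, c, ha, hb, hc', by omega, ?_⟩
          rw [key, hze, ← h', cls_append, cls_append]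

end

/-- for `w ∈ (E ∪ T)*` and `i ∈ [n]`, `w o_i e_i ~ w₁ w₂ w₃` for some
`w₁, w₃ ∈ O*` and `w₂ ∈ (E ∪ T)*`. -/
theorem stmt3 (n : ℕ) (hn : 1 ≤ n) (w : List (ETO n)) (hw : ∀ x ∈ w, ETO.isET x)
    (i : Fin n) :
    ∃ w1 w2 w3 : List (ETO n),
      (∀ x ∈ w1, ETO.isO x) ∧ (∀ x ∈ w2, ETO.isET x) ∧ (∀ x ∈ w3, ETO.isO x) ∧
      CongGen (RelETO n) (w ++ [ETO.o i, ETO.e i]) (w1 ++ w2 ++ w3) := by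
  obtain ⟨w1, w2, w3, h1, h2, h3, -, h⟩ := exists_normalForm _ (w ++ [ETO.o i, ETO.e i]) le_rfl
  exact ⟨w1, w2, w3, h1, h2, h3, cls_eq.1 h⟩

end RookPaper
end

section
/- Let w ∈ (E∪T∪O)^+. Then w ~ w₁ w₂ w₃ for some words w₁, w₃ ∈ O* and w₂ ∈ (E∪T)*. -/
/-!
Letters of `O` commute with letters of `T`, and `o_i` commutes with every `e_j`, `j ≠ i`; so `o_i`
can be carried to an end of a word unless it is trapped between two letters `e_i`. In that case
take the nearest ones, with a word `z` free of `e_i` between them. In the presence of `o_i`, every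
`t_ij` in `z` may be replaced by `o_j`, since `o_i t_ij ~ o_i o_j`; after this `e_i` commutes with
`z`, and `e_i o_i e_i ~ e_i` removes both `o_i` and one letter `e_i` (`exists_carry_e`,
`comm_or_reduce`). Hence a trapped `o_i` lowers the number of `E`-letters, and the theorem follows
by induction on that number and then on the length of the word, with the extra claim that
`w₂` has no more `E`-letters than `w` (`exists_normal_form`).

The computations take place in the monoid presented by the relations.
-/

namespace RookPaper

/-! ### The monoid presented by the relations -/

namespace ETOMonoid

/-- The congruence `CongGen (RelETO n)`, bundled as a congruence on the free monoid. -/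
def con (n : ℕ) : Con (FreeMonoid (ETO n)) where
  r u v := CongGen (RelETO n) u.toList v.toList
  iseqv := ⟨fun _ => .refl _, .symm, .trans⟩
  mul' h h' := CongGen.mul h h'

/-- The class of a word in the monoid presented by (R1)–(R17). -/
def cls {n : ℕ} (w : List (ETO n)) : (con n).Quotient := (con n).mk' (FreeMonoid.ofList w)

lemma cls_eq {n : ℕ} {u v : List (ETO n)} : cls u = cls v ↔ CongGen (RelETO n) u v :=
  Con.eq (con n)

lemma cls_append {n : ℕ} (u v : List (ETO n)) : cls (u ++ v) = cls u * cls v := rfl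

lemma cls_nil {n : ℕ} : cls ([] : List (ETO n)) = 1 := rfl

/-- The class of a single letter. -/
def gen {n : ℕ} (x : ETO n) : (con n).Quotient := cls [x]

lemma cls_cons {n : ℕ} (x : ETO n) (v : List (ETO n)) : cls (x :: v) = gen x * cls v := rfl

/-- Whether a letter lies in `E`. -/
def isE {n : ℕ} : ETO n → Bool
  | .e _ => true
  | _ => false

/-- The number of letters of a word that lie in `E`. -/
def eCount {n : ℕ} (w : List (ETO n)) : ℕ := w.countP isE

lemma tg_of_lt {n : ℕ} {i j : Fin n} (h : i < j) : tg i j h.ne = .t i j h := by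
  simp [tg, h]

section Relations

variable {n : ℕ}

lemma o_mul_o_self (i : Fin n) : gen (.o i) * gen (.o i) = gen (.o i) :=
  cls_eq.2 (.rel (.r11 i))

lemma o_comm_o (i j : Fin n) : gen (.o i) * gen (.o j) = gen (.o j) * gen (.o i) := by
  by_cases h : i = j
  · rw [h]
  · exact cls_eq.2 (.rel (.r12 i j h))

lemma o_comm_e {i j : Fin n} (h : i ≠ j) :
    gen (.o i) * gen (.e j) = gen (.e j) * gen (.o i) :=
  cls_eq.2 (.rel (.r13 i j h))

lemma e_o_e (i : Fin n) : gen (.e i) * gen (.o i) * gen (.e i) = gen (.e i) :=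
  cls_eq.2 (.rel (.r15 i))

lemma e_comm_e {i j : Fin n} (h : i ≠ j) :
    gen (.e i) * gen (.e j) = gen (.e j) * gen (.e i) :=
  cls_eq.2 (.rel (.r2 i j h))

lemma o_comm_t (k a b : Fin n) (h : a < b) :
    gen (.o k) * gen (.t a b h) = gen (.t a b h) * gen (.o k) := by
  have := RelETO.r16 a b k h.ne
  rw [tg_of_lt h] at this
  exact (cls_eq.2 (.rel this)).symm

lemma t_comm_e {k a b : Fin n} (h : a < b) (ha : k ≠ a) (hb : k ≠ b) :
    gen (.t a b h) * gen (.e k) = gen (.e k) * gen (.t a b h) := by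
  have := RelETO.r6 a b k h.ne ha hb
  rw [tg_of_lt h] at this
  exact cls_eq.2 (.rel this)

lemma t_mul_o_left {a b : Fin n} (h : a < b) :
    gen (.t a b h) * gen (.o a) = gen (.o a) * gen (.o b) := by
  have := RelETO.r17a a b h.ne
  rw [tg_of_lt h] at this
  exact cls_eq.2 (.rel this)

lemma t_mul_o_right {a b : Fin n} (h : a < b) :
    gen (.t a b h) * gen (.o b) = gen (.o b) * gen (.o a) := by
  have := RelETO.r17b a b h.ne
  rw [tg_of_lt h] at this
  rw [o_comm_o b a]
  exact cls_eq.2 (.rel this)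

lemma o_comm_letter {i : Fin n} {x : ETO n} (hx : x ≠ .e i) :
    gen x * gen (.o i) = gen (.o i) * gen x := by
  cases x with
  | e j => exact (o_comm_e (i := i) (j := j) fun h => hx (h ▸ rfl)).symm
  | t a b h => exact (o_comm_t i a b h).symm
  | o j => exact o_comm_o j i

/-- A letter `x ≠ e_i` can be carried across `o_i e_i`, possibly changing on the way:
`t_ij` changes into `o_j`, the letter `o_i` is absorbed, and any other letter stays the same. In
each case the result is a word `v` with as many `E`-letters as `x`. -/
lemma exists_carry_letter {i : Fin n} {x : ETO n} (hx : x ≠ .e i) :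
    ∃ v : List (ETO n), eCount v = eCount [x] ∧
      gen x * (gen (.o i) * gen (.e i)) = gen (.o i) * gen (.e i) * cls v := by
  cases x with
  | e j =>
    have hij : i ≠ j := fun h => hx (h ▸ rfl)
    refine ⟨[.e j], rfl, ?_⟩
    change _ = _ * gen _
    rw [← mul_assoc, ← o_comm_e hij, mul_assoc, ← e_comm_e hij, mul_assoc]
  | t a b h =>
    by_cases ha : i = a
    · subst ha
      refine ⟨[.o b], rfl, ?_⟩
      change _ = _ * gen _
      rw [← mul_assoc, t_mul_o_left h, mul_assoc, o_comm_e h.ne', mul_assoc]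
    by_cases hb : i = b
    · subst hb
      refine ⟨[.o a], rfl, ?_⟩
      change _ = _ * gen _
      rw [← mul_assoc, t_mul_o_right h, mul_assoc, o_comm_e h.ne, mul_assoc]
    · refine ⟨[.t a b h], rfl, ?_⟩
      change _ = _ * gen _
      rw [← mul_assoc, ← o_comm_t, mul_assoc, t_comm_e h ha hb, mul_assoc]
  | o j =>
    by_cases hij : j = i
    · subst hij
      refine ⟨[], rfl, ?_⟩
      rw [cls_nil, mul_one, ← mul_assoc, o_mul_o_self]
    · refine ⟨[.o j], rfl, ?_⟩
      change _ = _ * gen _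
      rw [← mul_assoc, o_comm_o, mul_assoc, o_comm_e hij, mul_assoc]

end Relations

variable {n : ℕ}

lemma eCount_append (u v : List (ETO n)) : eCount (u ++ v) = eCount u + eCount v :=
  List.countP_append

lemma eCount_cons (x : ETO n) (v : List (ETO n)) : eCount (x :: v) = eCount [x] + eCount v :=
  eCount_append [x] v

lemma eCount_eq_zero {w : List (ETO n)} (hw : ∀ x ∈ w, x.isO) : eCount w = 0 := by
  refine List.countP_eq_zero.2 fun x hx => ?_
  have := hw x hx
  cases x <;> simp_all [ETO.isO, isE]

lemma o_comm_word {i : Fin n} {z : List (ETO n)} (hz : .e i ∉ z) :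
    cls z * gen (.o i) = gen (.o i) * cls z := by
  induction z with
  | nil => simp [cls_nil]
  | cons x z ih =>
    obtain ⟨hx, hz⟩ := not_or.1 (List.mem_cons.not.1 hz)
    rw [cls_cons, mul_assoc, ih hz, ← mul_assoc, o_comm_letter (Ne.symm hx), mul_assoc]

/-! ### Releasing a trapped letter -/

/-- In the presence of `o_i`, the letter `e_i` can be carried to the left across a word `z` free
of `e_i`, at the cost of changing `z` but not its number of `E`-letters. -/
lemma exists_carry_e {i : Fin n} {z : List (ETO n)} (hz : .e i ∉ z) :
    ∃ z', eCount z' = eCount z ∧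
      cls z * (gen (.o i) * gen (.e i)) = gen (.o i) * gen (.e i) * cls z' := by
  induction z with
  | nil => exact ⟨[], rfl, by simp [cls_nil]⟩
  | cons x z ih =>
    obtain ⟨hx, hz⟩ := not_or.1 (List.mem_cons.not.1 hz)
    obtain ⟨z', hc, h⟩ := ih hz
    obtain ⟨v, hv, h'⟩ := exists_carry_letter (Ne.symm hx)
    refine ⟨v ++ z', by rw [eCount_append, eCount_cons, hv, hc], ?_⟩
    rw [cls_cons, mul_assoc, h, ← mul_assoc, h', cls_append, mul_assoc]

/-- Either `z` is free of `e_i`, so that `o_i` can be carried to the left across it, or `o_i` is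
trapped in `z o_i e_i`, and then this word is congruent to one with fewer `E`-letters. -/
lemma comm_or_reduce (i : Fin n) (z : List (ETO n)) :
    .e i ∉ z ∨ ∃ y, eCount y ≤ eCount z ∧ cls z * (gen (.o i) * gen (.e i)) = cls y := by
  induction z with
  | nil => exact .inl (by simp)
  | cons x z ih =>
    rcases ih with hz | ⟨y, hy, h⟩
    · by_cases hx : .e i = x
      · subst hx
        obtain ⟨z', hc, h⟩ := exists_carry_e hz
        refine .inr ⟨.e i :: z', by rw [eCount_cons, eCount_cons _ z, hc], ?_⟩
        rw [cls_cons, mul_assoc, h, ← mul_assoc, ← mul_assoc, e_o_e, cls_cons]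
      · exact .inl (by simp [hx, hz])
    · refine .inr ⟨x :: y, ?_, by rw [cls_cons, mul_assoc, h, cls_cons]⟩
      rw [eCount_cons, eCount_cons _ z]
      omega

/-! ### The normal form -/

/-- A letter `e_i` following a word over `O` can be carried to its left end, up to a single `o_i`. -/
lemma o_word_mul_e (i : Fin n) {w : List (ETO n)} (hw : ∀ x ∈ w, x.isO) :
    ∃ w', (∀ x ∈ w', x.isO) ∧ (cls w * gen (.e i) = gen (.e i) * cls w' ∨
      cls w * gen (.e i) = gen (.o i) * gen (.e i) * cls w') := by
  induction w with
  | nil => exact ⟨[], by simp, .inl (by simp [cls_nil])⟩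
  | cons x w ih =>
    obtain ⟨w', hw', h⟩ := ih fun x hx => hw x (List.mem_cons_of_mem _ hx)
    cases x with
    | e j => exact (hw _ List.mem_cons_self).elim
    | t a b hab => exact (hw _ List.mem_cons_self).elim
    | o j =>
      by_cases hji : j = i
      · subst hji
        refine ⟨w', hw', .inr ?_⟩
        rcases h with h | h
        · rw [cls_cons, mul_assoc, h, mul_assoc]
        · rw [cls_cons, mul_assoc, h, ← mul_assoc, ← mul_assoc, o_mul_o_self]
      · refine ⟨.o j :: w', ?_, ?_⟩
        · simpa [ETO.isO] using hw'
        · refine h.imp (fun h => ?_) (fun h => ?_)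
          · rw [cls_cons, mul_assoc, h, ← mul_assoc, o_comm_e hji, cls_cons, mul_assoc]
          · rw [cls_cons, mul_assoc, h, ← mul_assoc, ← mul_assoc, o_comm_o, mul_assoc (gen (.o i)),
              o_comm_e hji, cls_cons]
            simp only [mul_assoc]

lemma o_word_mul_t {a b : Fin n} (h : a < b) {w : List (ETO n)} (hw : ∀ x ∈ w, x.isO) :
    cls w * gen (.t a b h) = gen (.t a b h) * cls w := by
  induction w with
  | nil => simp [cls_nil]
  | cons x w ih =>
    have ih := ih fun x hx => hw x (List.mem_cons_of_mem _ hx)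
    have hx := hw x List.mem_cons_self
    cases x with
    | o j => rw [cls_cons, mul_assoc, ih, ← mul_assoc, o_comm_t, mul_assoc]
    | _ => simp [ETO.isO] at hx

/-- The bound on `eCount w2` lets the induction on the number of `E`-letters be applied again to
words built from a normal form. -/
lemma exists_normal_form (k : ℕ) : ∀ w : List (ETO n), eCount w < k →
    ∃ w1 w2 w3 : List (ETO n), (∀ x ∈ w1, x.isO) ∧ (∀ x ∈ w2, x.isET) ∧ (∀ x ∈ w3, x.isO) ∧
      eCount w2 ≤ eCount w ∧ cls w = cls w1 * cls w2 * cls w3 := by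
  induction k with
  | zero => simp
  | succ k ihk =>
    intro w
    induction w using List.reverseRecOn with
    | nil => exact fun _ => ⟨[], [], [], by simp, by simp, by simp, le_rfl, by simp [cls_nil]⟩
    | append_singleton w x ih =>
      intro hk
      rw [eCount_append] at hk
      obtain ⟨w1, w2, w3, h1, h2, h3, hc, h⟩ := ih (by omega)
      have hcl : cls (w ++ [x]) = cls w1 * cls w2 * (cls w3 * gen x) := by
        rw [cls_append, h, mul_assoc]
        rfl
      rw [hcl, eCount_append]
      cases x with
      | o j =>
        refine ⟨w1, w2, w3 ++ [.o j], h1, h2, ?_, by omega, rfl⟩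
        simpa [or_imp, forall_and, ETO.isO] using h3
      | t a b hab =>
        refine ⟨w1, w2 ++ [.t a b hab], w3, h1, ?_, h3, by rw [eCount_append]; omega, ?_⟩
        · simpa [or_imp, forall_and, ETO.isET] using h2
        · rw [o_word_mul_t hab h3, cls_append]
          simp only [mul_assoc]
          rfl
      | e i =>
        have h2' : ∀ x ∈ w2 ++ [.e i], x.isET := by
          simpa [or_imp, forall_and, ETO.isET] using h2
        obtain ⟨w', hw', he | he⟩ := o_word_mul_e i h3
        · refine ⟨w1, w2 ++ [.e i], w', h1, h2', hw', by rw [eCount_append]; omega, ?_⟩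
          rw [he, cls_append]
          simp only [mul_assoc]
          rfl
        · rcases comm_or_reduce i w2 with hi | ⟨y, hy, hred⟩
          · refine ⟨w1 ++ [.o i], w2 ++ [.e i], w', ?_, h2', hw',
              by rw [eCount_append]; omega, ?_⟩
            · simpa [or_imp, forall_and, ETO.isO] using h1
            · change _ = cls w1 * gen (.o i) * (cls w2 * gen (.e i)) * cls w'
              rw [he]
              simp only [mul_assoc]
              rw [← mul_assoc (cls w2), o_comm_word hi, mul_assoc]
          · have h10 := eCount_eq_zero h1
            have hw0 := eCount_eq_zero hw'
            have he1 : eCount [(.e i : ETO n)] = 1 := rfl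
            have hlt : eCount (w1 ++ y ++ w') < k := by
              simp only [eCount_append]
              omega
            obtain ⟨u1, u2, u3, g1, g2, g3, gc, g⟩ := ihk _ hlt
            simp only [eCount_append] at gc
            refine ⟨u1, u2, u3, g1, g2, g3, by omega, ?_⟩
            rw [← g, he, cls_append, cls_append, ← hred]
            simp only [mul_assoc]

end ETOMonoid

/-- every `w ∈ (E ∪ T ∪ O)⁺` satisfies `w ~ w₁ w₂ w₃` for some
`w₁, w₃ ∈ O*` and `w₂ ∈ (E ∪ T)*`. -/
theorem stmt4 (n : ℕ) (hn : 1 ≤ n) (w : List (ETO n)) (hw : w ≠ []) :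
    ∃ w1 w2 w3 : List (ETO n),
      (∀ x ∈ w1, ETO.isO x) ∧ (∀ x ∈ w2, ETO.isET x) ∧ (∀ x ∈ w3, ETO.isO x) ∧
      CongGen (RelETO n) w (w1 ++ w2 ++ w3) := by
  obtain ⟨w1, w2, w3, h1, h2, h3, -, h⟩ :=
    ETOMonoid.exists_normal_form (ETOMonoid.eCount w + 1) w (Nat.lt_succ_self _)
  exact ⟨w1, w2, w3, h1, h2, h3, ETOMonoid.cls_eq.1 h⟩

end RookPaper
end

section
/- Let A ⊆ [n] be nonempty and let i ∈ A. Then o_A ~ o_i t_A and o_A ~ t_A o_i (where in the case |A| = 1, t_A is the empty word and the claim reads o_i ~ o_i). -/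
/-!
The letter `o_i` commutes with every `t`-letter (`r16`), hence passes through `t_A`, so only
`o_A ~ o_i t_A` needs an argument. This is proved by induction on the increasing list
`a, b, …` of members of `A`, for all `i` in the list at once (`map_o_congr`). The induction
hypothesis for the tail turns `o_a o_b ⋯` into `o_a o_b t_{b…}`, and `r17a`, `r17b` replace `o_a o_b`
by `t_ab o_a` or `t_ab o_b`, which supplies the missing letter `t_ab`. In the second case the
induction hypothesis, used for both `b` and `i`, exchanges `o_b` for any `o_i` with `i` in the
tail.
-/

namespace RookPaper

lemma congGen_cons {X : Type*} {R : List X → List X → Prop} (x : X) {u v : List X}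
    (h : CongGen R u v) : CongGen R (x :: u) (x :: v) :=
  .mul (.refl [x]) h

/-- `o_k` passes through a product of `t`-letters; no condition on `l` is needed because `tgd`
is empty on equal indices. -/
lemma o_tChain_comm {n : ℕ} (k : Fin n) (l : List (Fin n)) :
    CongGen (RelETO n) (ETO.o k :: tChain l) (tChain l ++ [ETO.o k]) := by
  induction l with
  | nil => exact .refl _
  | cons a l ih =>
    cases l with
    | nil => exact .refl _
    | cons b rest =>
      by_cases h : a = b
      · simpa [tChain, tgd, h] using ih
      · simp only [tChain, tgd, h, dite_false]
        have h1 : CongGen (RelETO n) ([ETO.o k, tg a b h] ++ tChain (b :: rest))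
            ([tg a b h, ETO.o k] ++ tChain (b :: rest)) :=
          .mul (.symm (.rel (.r16 a b k h))) (.refl _)
        exact h1.trans (congGen_cons (tg a b h) ih)

lemma map_o_congr {n : ℕ} (l : List (Fin n)) (hl : l.Nodup) (i : Fin n) (hi : i ∈ l) :
    CongGen (RelETO n) (l.map ETO.o) (ETO.o i :: tChain l) := by
  induction l generalizing i with
  | nil => simp at hi
  | cons a l ih =>
    cases l with
    | nil =>
      obtain rfl : i = a := by simpa using hi
      exact .refl _
    | cons b rest =>
      have hab : a ≠ b := fun h => (List.nodup_cons.mp hl).1 (by simp [h])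
      have ih := ih (List.nodup_cons.mp hl).2
      have hb := ih b (by simp)
      have h1 : CongGen (RelETO n) ((a :: b :: rest).map ETO.o)
          ([ETO.o a, ETO.o b] ++ tChain (b :: rest)) :=
        .mul (.refl [ETO.o a]) hb
      -- `r16` moves `o_i` to the right of `t_ab`, so it remains to reach `t_ab o_i t_{b…}`.
      have h2 : CongGen (RelETO n) ([tg a b hab, ETO.o i] ++ tChain (b :: rest))
          (ETO.o i :: tChain (a :: b :: rest)) := by
        simp only [tChain, tgd, hab, dite_false]
        exact CongGen.mul (CongGen.rel (RelETO.r16 a b i hab)) (.refl (tChain (b :: rest)))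
      refine .trans h1 (.trans ?_ h2)
      rcases List.mem_cons.mp hi with rfl | hi
      · exact .mul (.symm (.rel (.r17a i b hab))) (.refl _)
      · have h3 : CongGen (RelETO n) ([ETO.o a, ETO.o b] ++ tChain (b :: rest))
            ([tg a b hab, ETO.o b] ++ tChain (b :: rest)) :=
          .mul (.symm (.rel (.r17b a b hab))) (.refl _)
        exact h3.trans (congGen_cons (tg a b hab) (hb.symm.trans (ih i hi)))

/-- for nonempty `A ⊆ [n]` and `i ∈ A`, `o_A ~ o_i t_A` and
`o_A ~ t_A o_i`. -/
theorem stmt5 (n : ℕ) (hn : 1 ≤ n) (A : Finset (Fin n)) (hA : A.Nonempty)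
    (i : Fin n) (hi : i ∈ A) :
    CongGen (RelETO n) (oWord A) (ETO.o i :: tWord A) ∧
    CongGen (RelETO n) (oWord A) (tWord A ++ [ETO.o i]) := by
  have h := map_o_congr (A.sort (· ≤ ·)) (A.sort_nodup _) i ((A.mem_sort _).mpr hi)
  exact ⟨h, h.trans (o_tChain_comm i _)⟩

end RookPaper
end
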